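/- arXiv:1909.07206 — 6 statements merged into one kernel-verified Lean document; each statement's English description precedes it below -/
import Mathlib

section
/- Let n ≥ 1 and let α ∈ ℤ_{≥0}^n be a composition. If the key polynomial κ_α(x) equals Max_α(x), then α avoids the composition pattern (0,2), i.e., there do not exist indices i < j with α_j − α_i ≥ 2. -/
open MvPolynomial

/-- Gale order: `C ≤ D` iff same cardinality and for each `k`, the `k`-th least element of `C`
is at most the `k`-th least element of `D`. -/
def GaleLE {n : ℕ} (C D : Finset (Fin n)) : Prop :=
  C.card = D.card ∧ ∀ (k : ℕ) (hC : k < C.card) (hD : k < D.card),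
    (C.orderIsoOfFin rfl ⟨k, hC⟩ : Fin n) ≤ (D.orderIsoOfFin rfl ⟨k, hD⟩ : Fin n)

/-- `C ≤ D` for diagrams: columnwise Gale order. -/
def DiagramLE {n : ℕ} (C D : Fin n → Finset (Fin n)) : Prop := ∀ j, GaleLE (C j) (D j)

/-- The skyline diagram of a composition `α` (0-indexed): column `j` consists of the rows `i`
with `α i ≥ j + 1`, i.e. row `i` contains the first `α i` boxes. -/
def skyline {n : ℕ} (α : Fin n → ℕ) (j : Fin n) : Finset (Fin n) :=
  Finset.univ.filter fun i => (j : ℕ) < α i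

/-- The monomial `x^C = ∏_j ∏_{i ∈ C_j} x_i` of a diagram `C`. -/
noncomputable def xDiagram {n : ℕ} (C : Fin n → Finset (Fin n)) : MvPolynomial (Fin n) ℤ :=
  ∏ j, ∏ i ∈ C j, X i

/- `Max_D(x) = ∑_{C ≤ D} x^C`, summed over all diagrams `C` with `C ≤ D`. -/
open scoped Classical in
noncomputable def MaxPoly {n : ℕ} (D : Fin n → Finset (Fin n)) : MvPolynomial (Fin n) ℤ :=
  ∑ C ∈ Finset.univ.filter (fun C : Fin n → Finset (Fin n) => DiagramLE C D), xDiagram C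

/-- `K` is the family of key polynomials: `K α = x^α` whenever `α` is weakly decreasing,
and whenever `α i < α (i+1)`, `K α = π_i (K α')` where `α'` exchanges `α i, α (i+1)`;
the Demazure operator identity `π_i f = ∂_i (x_i f)` is expressed denominator-free as
`(x_i - x_{i+1}) · π_i f = x_i f - s_i · (x_i f)`. -/
def IsKeyFamily {n : ℕ} (K : (Fin n → ℕ) → MvPolynomial (Fin n) ℤ) : Prop :=
  (∀ α : Fin n → ℕ, (∀ i j : Fin n, i ≤ j → α j ≤ α i) → K α = ∏ i, X i ^ α i) ∧
  ∀ (α : Fin n → ℕ) (i j : Fin n), (i : ℕ) + 1 = (j : ℕ) → α i < α j →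
    (X i - X j) * K α =
      X i * K (α ∘ Equiv.swap i j) -
        rename (Equiv.swap i j) (X i * K (α ∘ Equiv.swap i j))

/-- `α` avoids the composition pattern `(0,2)`: there are no indices `i < j` with
`α j - α i ≥ 2`. -/
def AvoidsZeroTwo {n : ℕ} (α : Fin n → ℕ) : Prop :=
  ¬ ∃ i j : Fin n, i < j ∧ α i + 2 ≤ α j


/-- coefficient of `x^β`, with `β` a plain function. -/
noncomputable def cf {n : ℕ} (p : MvPolynomial (Fin n) ℤ) (β : Fin n → ℕ) : ℤ :=
  coeff (Finsupp.equivFunOnFinite.symm β) p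

/-- set entries `i`, `j` to `t`, `s`. -/
def St {n : ℕ} (β : Fin n → ℕ) (i j : Fin n) (t s : ℕ) : Fin n → ℕ :=
  Function.update (Function.update β i t) j s

theorem St_apply {n : ℕ} (β : Fin n → ℕ) (i j : Fin n) (t s : ℕ) (l : Fin n) :
    St β i j t s l = if l = j then s else if l = i then t else β l := by
  simp only [St, Function.update_apply]

theorem comp_swap_eq {n : ℕ} (α : Fin n → ℕ) (i j : Fin n) :
    α ∘ Equiv.swap i j = St α i j (α j) (α i) := by
  funext l
  simp only [Function.comp, St_apply, Equiv.swap_apply_def]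
  split_ifs <;> simp_all

theorem cf_X_mul_St_i {n : ℕ} (p : MvPolynomial (Fin n) ℤ) (β : Fin n → ℕ) {i j : Fin n}
    (hij : i ≠ j) (t s : ℕ) : cf (X i * p) (St β i j (t+1) s) = cf p (St β i j t s) := by
  unfold cf
  rw [← coeff_X_mul _ i p]
  congr 1
  ext l
  simp only [Finsupp.equivFunOnFinite_symm_apply_apply, Finsupp.add_apply, St_apply,
    Finsupp.single_apply]
  grind

theorem cf_X_mul_St_j {n : ℕ} (p : MvPolynomial (Fin n) ℤ) (β : Fin n → ℕ) {i j : Fin n}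
    (hij : i ≠ j) (t s : ℕ) : cf (X j * p) (St β i j t (s+1)) = cf p (St β i j t s) := by
  unfold cf
  rw [← coeff_X_mul _ j p]
  congr 1
  ext l
  simp only [Finsupp.equivFunOnFinite_symm_apply_apply, Finsupp.add_apply, St_apply,
    Finsupp.single_apply]
  grind

theorem cf_X_mul_zero {n : ℕ} (p : MvPolynomial (Fin n) ℤ) (β : Fin n → ℕ) {i : Fin n}
    (h : β i = 0) : cf (X i * p) β = 0 := by
  unfold cf
  rw [coeff_X_mul', if_neg]
  simp [h]

theorem cf_rename_swap {n : ℕ} (p : MvPolynomial (Fin n) ℤ) (β : Fin n → ℕ) {i j : Fin n}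
    (hij : i ≠ j) (t s : ℕ) :
    cf (rename (Equiv.swap i j) p) (St β i j t s) = cf p (St β i j s t) := by
  unfold cf
  rw [← coeff_rename_mapDomain _ (Equiv.swap i j).injective p]
  congr 1
  ext l
  rw [← Equiv.swap_apply_self i j l]
  generalize Equiv.swap i j l = m
  rw [Finsupp.mapDomain_apply (Equiv.swap i j).injective]
  simp only [Finsupp.equivFunOnFinite_symm_apply_apply, St_apply, Equiv.swap_apply_def]
  split_ifs <;> simp_all

theorem string_formula {n : ℕ} (f g : MvPolynomial (Fin n) ℤ) {i j : Fin n} (hij : i ≠ j)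
    (h : (X i - X j) * g = X i * f - rename (Equiv.swap i j) (X i * f))
    (β : Fin n → ℕ) (N u : ℕ) (hu : u ≤ N) :
    cf g (St β i j u (N-u)) = ∑ t ∈ Finset.Ico (N-u) (N+1), cf f (St β i j t (N-t))
      - ∑ t ∈ Finset.range u, cf f (St β i j t (N-t)) := by
  have h' : ∀ γ, cf (X i * g) γ - cf (X j * g) γ =
      cf (X i * f) γ - cf (rename (Equiv.swap i j) (X i * f)) γ := by
    intro γ
    have := congrArg (fun p => cf p γ) h
    simpa [cf, sub_mul] using this
  induction u with
  | zero =>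
    have := h' (St β i j 0 (N+1))
    rw [cf_X_mul_zero _ _ (by simp [St_apply, hij]), cf_X_mul_St_j _ _ hij,
      cf_X_mul_zero _ _ (by simp [St_apply, hij]), cf_rename_swap _ _ hij,
      cf_X_mul_St_i _ _ hij] at this
    simp
    linarith
  | succ u ih =>
    have ih := ih (by omega)
    have := h' (St β i j (u+1) (N-u))
    obtain ⟨v, hv⟩ : ∃ v, N - u = v + 1 := ⟨N-u-1, by omega⟩
    rw [cf_X_mul_St_i _ _ hij, cf_X_mul_St_i _ _ hij, cf_rename_swap _ _ hij, hv, 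
      cf_X_mul_St_j _ _ hij, cf_X_mul_St_i _ _ hij] at this
    have e : N - (u+1) = v := by omega
    rw [e, Finset.sum_range_succ, Finset.sum_eq_sum_Ico_succ_bot (by omega), ← hv]
    have e2 : N - v = u+1 := by omega
    rw [e2, hv]
    rw [hv] at ih
    linarith

theorem string_supp {n : ℕ} (f g : MvPolynomial (Fin n) ℤ) {i j : Fin n} (hij : i ≠ j)
    (h : (X i - X j) * g = X i * f - rename (Equiv.swap i j) (X i * f))
    (β : Fin n → ℕ) (N u : ℕ) (hu : u ≤ N) (hne : cf g (St β i j u (N-u)) ≠ 0) :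
    ∃ t ≤ N, cf f (St β i j t (N-t)) ≠ 0 ∧ ((t ≤ u ∧ u ≤ N - t) ∨ (N - t ≤ u ∧ u ≤ t)) := by
  by_contra hc
  push Not at hc
  apply hne
  have hz : ∀ t ≤ N, ((t ≤ u ∧ u ≤ N - t) ∨ (N - t ≤ u ∧ u ≤ t)) →
      cf f (St β i j t (N-t)) = 0 := by
    intro t ht h1
    by_contra h2
    have := hc t ht h2
    omega
  rw [string_formula f g hij h β N u hu]
  rcases le_total u (N-u) with h1 | h1
  · rw [Finset.sum_eq_zero, Finset.sum_eq_zero, sub_zero]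
    · intro t ht
      rw [Finset.mem_range] at ht
      exact hz t (by omega) (by omega)
    · intro t ht
      rw [Finset.mem_Ico] at ht
      exact hz t (by omega) (by omega)
  · rw [← Finset.sum_Ico_consecutive _ h1 (by omega : u ≤ N+1),
      ← Finset.sum_range_add_sum_Ico _ h1]
    rw [Finset.sum_eq_zero (s := Finset.Ico u (N+1)), Finset.sum_eq_zero (s := Finset.range (N-u))]
    · ring
    · intro t ht
      rw [Finset.mem_range] at ht
      exact hz t (by omega) (by omega)
    · intro t ht
      rw [Finset.mem_Ico] at ht
      exact hz t (by omega) (by omega)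

/-- prefix sums -/
def pre {n : ℕ} (f : Fin n → ℕ) (k : ℕ) : ℕ := ∑ l : Fin n, if (l : ℕ) < k then f l else 0

theorem pre_update {n : ℕ} (f : Fin n → ℕ) (i : Fin n) (t k : ℕ) :
    pre (Function.update f i t) k + (if (i:ℕ) < k then f i else 0) =
      pre f k + (if (i:ℕ) < k then t else 0) := by
  unfold pre
  rw [← Finset.add_sum_erase _ _ (Finset.mem_univ i), ← Finset.add_sum_erase _ (fun l : Fin n => if (l : ℕ) < k then f l else 0) (Finset.mem_univ i)]
  have : ∑ x ∈ Finset.univ.erase i, (if (x:ℕ) < k then Function.update f i t x else 0) =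
      ∑ x ∈ Finset.univ.erase i, (if (x:ℕ) < k then f x else 0) := by
    apply Finset.sum_congr rfl
    intro x hx
    rw [Function.update_of_ne (Finset.ne_of_mem_erase hx)]
  rw [this]
  simp
  omega

theorem pre_St {n : ℕ} (f : Fin n → ℕ) {i j : Fin n} (hij : i ≠ j) (t s k : ℕ) :
    pre (St f i j t s) k + (if (i:ℕ) < k then f i else 0) + (if (j:ℕ) < k then f j else 0) =
      pre f k + (if (i:ℕ) < k then t else 0) + (if (j:ℕ) < k then s else 0) := by
  have h1 := pre_update f i t k
  have h2 := pre_update (Function.update f i t) j s k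
  rw [Function.update_of_ne hij.symm] at h2
  unfold St
  omega

theorem pre_block {n : ℕ} (f : Fin n → ℕ) {p q : ℕ} (hpq : p ≤ q) :
    pre f q = pre f p + ∑ l : Fin n, if p ≤ (l:ℕ) ∧ (l:ℕ) < q then f l else 0 := by
  unfold pre
  rw [← Finset.sum_add_distrib]
  apply Finset.sum_congr rfl
  intro l _
  split_ifs <;> omega

theorem pre_sum {n : ℕ} (N : ℕ) (χ : ℕ → Fin n → ℕ) (k : ℕ) :
    pre (fun l => ∑ c ∈ Finset.range N, χ c l) k = ∑ c ∈ Finset.range N, pre (χ c) k := by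
  unfold pre
  rw [Finset.sum_comm]
  apply Finset.sum_congr rfl
  intro l _
  split_ifs <;> simp

/-- columns of the skyline diagram -/
def sky {n : ℕ} (α : Fin n → ℕ) (c : ℕ) (l : Fin n) : ℕ := if c < α l then 1 else 0

theorem sum_sky {n : ℕ} (α : Fin n → ℕ) (N : ℕ) (h : ∀ l, α l ≤ N) :
    (fun l => ∑ c ∈ Finset.range N, sky α c l) = α := by
  funext l
  have : (Finset.range N).filter (fun c => c < α l) = Finset.range (α l) := by
    ext c; have := h l; simp; omega
  simp [sky, this]

/-- `β` is the weight of a diagram below the skyline diagram of `α`. -/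
def PW {n : ℕ} (N : ℕ) (α β : Fin n → ℕ) : Prop :=
  ∃ χ : ℕ → Fin n → ℕ, (∀ c l, χ c l ≤ 1) ∧ (∀ c k, pre (sky α c) k ≤ pre (χ c) k) ∧
    (∀ c, pre (χ c) n = pre (sky α c) n) ∧ β = fun l => ∑ c ∈ Finset.range N, χ c l

theorem PW.refl {n : ℕ} {N : ℕ} {α : Fin n → ℕ} (h : ∀ l, α l ≤ N) : PW N α α :=
  ⟨sky α, fun c l => by unfold sky; split_ifs <;> simp, fun _ _ => le_rfl, fun _ => rfl,
    (sum_sky α N h).symm⟩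

theorem PW.pre_le {n : ℕ} {N : ℕ} {α β : Fin n → ℕ} (h : ∀ l, α l ≤ N) (hP : PW N α β) (k : ℕ) :
    pre α k ≤ pre β k := by
  obtain ⟨χ, -, h2, -, rfl⟩ := hP
  rw [pre_sum]
  conv_lhs => rw [← sum_sky α N h, pre_sum]
  exact Finset.sum_le_sum fun c _ => h2 c k

/-- rows block: columns have as many boxes in the block as those of the skyline diagram. -/
theorem PW.block {n : ℕ} {N : ℕ} {α β : Fin n → ℕ} (h : ∀ l, α l ≤ N) (hP : PW N α β)
    {p q : ℕ} (hpq : p ≤ q) (hp : pre α p = pre β p) (hq : pre α q = pre β q) :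
    ∃ χ : ℕ → Fin n → ℕ, (∀ c l, χ c l ≤ 1) ∧ (β = fun l => ∑ c ∈ Finset.range N, χ c l) ∧
      ∀ c < N, ∑ l : Fin n, (if p ≤ (l:ℕ) ∧ (l:ℕ) < q then χ c l else 0) = 
        ∑ l : Fin n, (if p ≤ (l:ℕ) ∧ (l:ℕ) < q then sky α c l else 0) := by
  obtain ⟨χ, h1, h2, -, rfl⟩ := hP
  refine ⟨χ, h1, rfl, ?_⟩
  have key : ∀ k, pre α k = pre (fun l => ∑ c ∈ Finset.range N, χ c l) k →
      ∀ c < N, pre (sky α c) k = pre (χ c) k := by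
    intro k hk c hc
    rw [pre_sum, ← sum_sky α N h, pre_sum] at hk
    exact (Finset.sum_eq_sum_iff_of_le (fun c _ => h2 c k)).1 hk c (Finset.mem_range.2 hc)
  intro c hc
  have e1 := key p hp c hc
  have e2 := key q hq c hc
  have e3 := pre_block (χ c) hpq
  have e4 := pre_block (sky α c) hpq
  omega

theorem PW.max {n : ℕ} {N : ℕ} {α β : Fin n → ℕ} (h : ∀ l, α l ≤ N) (hP : PW N α β)
    {p q : ℕ} (hpq : p ≤ q) (hp : pre α p = pre β p) (hq : pre α q = pre β q) (M : ℕ)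
    (hM : ∀ l : Fin n, p ≤ (l:ℕ) → (l:ℕ) < q → α l ≤ M) (l : Fin n) (hl : p ≤ (l:ℕ))
    (hl' : (l:ℕ) < q) : β l ≤ M := by
  obtain ⟨χ, h1, rfl, h3⟩ := hP.block h hpq hp hq
  have : ∀ c ∈ Finset.range N, χ c l ≤ if c < M then 1 else 0 := by
    intro c hc
    split_ifs with hcM
    · exact h1 c l
    · have h4 := h3 c (Finset.mem_range.1 hc)
      rw [Finset.sum_eq_zero (s := Finset.univ) (f := fun l : Fin n => (if p ≤ (l:ℕ) ∧ (l:ℕ) < q then sky α c l else 0))] at h4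
      · have := Finset.sum_eq_zero_iff.1 h4 l (Finset.mem_univ l)
        simp [hl, hl'] at this
        omega
      · intro r _
        split_ifs with hr
        · have := hM r hr.1 hr.2
          unfold sky
          rw [if_neg (by omega)]
        · rfl
  refine (Finset.sum_le_sum this).trans ?_
  rw [Finset.sum_ite]
  simp
  calc _ ≤ (Finset.range M).card := Finset.card_le_card (by intro c; simp)
    _ = M := by simp

theorem PW.max_two {n : ℕ} {N : ℕ} {α β : Fin n → ℕ} (h : ∀ l, α l ≤ N) (hP : PW N α β)
    {p q : ℕ} (hpq : p ≤ q) (hp : pre α p = pre β p) (hq : pre α q = pre β q) (A : ℕ)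
    (r : Fin n) (hr : α r ≤ A + 1)
    (hM : ∀ l : Fin n, p ≤ (l:ℕ) → (l:ℕ) < q → l ≠ r → α l ≤ A) (l l' : Fin n)
    (hne : l ≠ l') (hl : p ≤ (l:ℕ))
    (hl' : (l:ℕ) < q) (hm : p ≤ (l':ℕ)) (hm' : (l':ℕ) < q) : β l + β l' ≤ 2 * A + 1 := by
  obtain ⟨χ, h1, rfl, h3⟩ := hP.block h hpq hp hq
  have : ∀ c ∈ Finset.range N, χ c l + χ c l' ≤
      (if c < A then 1 else 0) + (if c < A + 1 then 1 else 0) := by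
    intro c hc
    have h4 := h3 c (Finset.mem_range.1 hc)
    have hle : ∑ x ∈ {l, l'}, (if p ≤ (x:ℕ) ∧ (x:ℕ) < q then χ c x else 0) ≤
        ∑ x : Fin n, (if p ≤ (x:ℕ) ∧ (x:ℕ) < q then χ c x else 0) :=
      Finset.sum_le_sum_of_subset (Finset.subset_univ _)
    rw [Finset.sum_pair hne, if_pos ⟨hl, hl'⟩, if_pos ⟨hm, hm'⟩, h4] at hle
    by_cases hcA : c < A
    · have := h1 c l
      have := h1 c l'
      rw [if_pos hcA, if_pos (by omega)]
      omega
    · have h5 : ∑ x : Fin n, (if p ≤ (x:ℕ) ∧ (x:ℕ) < q then sky α c x else 0) ≤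
          ∑ x : Fin n, if x = r then (if c < A + 1 then 1 else 0) else 0 := by
        apply Finset.sum_le_sum
        intro x _
        by_cases hx : x = r
        · subst hx
          unfold sky
          split_ifs <;> omega
        · rw [if_neg hx]
          split_ifs with hb
          · have := hM x hb.1 hb.2 hx
            unfold sky
            rw [if_neg (by omega)]
          · rfl
      rw [Finset.sum_ite_eq' ] at h5
      simp only [Finset.mem_univ, if_true] at h5
      rw [if_neg hcA]
      omega
  have aux : ∀ M, ∑ c ∈ Finset.range N, (if c < M then 1 else 0) ≤ M := by
    intro M
    rw [Finset.sum_ite]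
    simp
    calc _ ≤ (Finset.range M).card := Finset.card_le_card (by intro c; simp)
      _ = M := by simp
  have h6 := Finset.sum_le_sum this
  rw [Finset.sum_add_distrib, Finset.sum_add_distrib] at h6
  have := aux A
  have := aux (A+1)
  show ∑ c ∈ Finset.range N, χ c l + ∑ c ∈ Finset.range N, χ c l' ≤ _
  omega

theorem pre_succ {n : ℕ} (f : Fin n → ℕ) (i : Fin n) : pre f (i + 1) = pre f i + f i := by
  rw [pre_block f (Nat.le_succ (i:ℕ))]
  congr 1
  rw [Finset.sum_eq_single i]
  · simp
  · intro b _ hb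
    rw [if_neg]
    intro h
    exact hb (Fin.ext (by omega))
  · simp

/-- choose `d` columns in which to exchange rows `x`, `y`. -/
theorem choose_cols {n : ℕ} (N : ℕ) (χ : ℕ → Fin n → ℕ) (h1 : ∀ c l, χ c l ≤ 1) (x y : Fin n)
    (hxy : x ≠ y) (d : ℕ)
    (hd : d + ∑ c ∈ Finset.range N, χ c y ≤ ∑ c ∈ Finset.range N, χ c x) :
    ∃ χ' : ℕ → Fin n → ℕ, (∀ c, χ' c = χ c ∨ χ' c = St (χ c) x y (χ c y) (χ c x)) ∧
      (∑ c ∈ Finset.range N, χ' c x) + d = ∑ c ∈ Finset.range N, χ c x ∧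
      (∑ c ∈ Finset.range N, χ' c y) = ∑ c ∈ Finset.range N, χ c y + d ∧
      ∀ l, l ≠ x → l ≠ y → ∀ c, χ' c l = χ c l := by
  have hA : d ≤ ((Finset.range N).filter (fun c => χ c x = 1 ∧ χ c y = 0)).card := by
    have : ∑ c ∈ Finset.range N, χ c x ≤
        ∑ c ∈ Finset.range N, ((if χ c x = 1 ∧ χ c y = 0 then 1 else 0) + χ c y) := by
      apply Finset.sum_le_sum
      intro c _
      have := h1 c x
      split_ifs <;> omega
    rw [Finset.sum_add_distrib, ← Finset.card_filter] at this
    omega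
  obtain ⟨S, hS, hc⟩ := Finset.exists_subset_card_eq hA
  have hS1 : ∀ c ∈ S, χ c x = 1 ∧ χ c y = 0 := fun c hc => (Finset.mem_filter.1 (hS hc)).2
  have hS2 : S ⊆ Finset.range N := fun c hc => (Finset.mem_filter.1 (hS hc)).1
  have hsum : ∑ c ∈ Finset.range N, (if c ∈ S then 1 else 0) = d := by
    rw [← Finset.card_filter, ← hc]
    congr 1
    ext c
    simp only [Finset.mem_filter]
    exact ⟨fun h => h.2, fun h => ⟨hS2 h, h⟩⟩
  refine ⟨fun c => if c ∈ S then St (χ c) x y (χ c y) (χ c x) else χ c, ?_, ?_, ?_, ?_⟩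
  · intro c
    by_cases h : c ∈ S <;> simp [h]
  · rw [← hsum, ← Finset.sum_add_distrib]
    apply Finset.sum_congr rfl
    intro c _
    by_cases h : c ∈ S
    · have := hS1 c h
      simp [h, St_apply, hxy, this]
    · simp [h]
  · rw [← hsum, ← Finset.sum_add_distrib]
    apply Finset.sum_congr rfl
    intro c _
    by_cases h : c ∈ S
    · have := hS1 c h
      simp [h, St_apply, this]
    · simp [h]
  · intro l hl hl' c
    by_cases h : c ∈ S <;> simp [h, St_apply, hl, hl']

theorem St_swap {n : ℕ} (f : Fin n → ℕ) {i j : Fin n} (hij : i ≠ j) (t s : ℕ) :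
    St f j i s t = St f i j t s := by
  funext l
  simp only [St_apply]
  grind

theorem col_ok {n : ℕ} (χ D : Fin n → ℕ) {i j : Fin n} (hij : (i:ℕ) + 1 = j)
    (h1 : ∀ l, χ l ≤ 1) (hD : ∀ l, D l ≤ 1) (hDij : D j ≤ D i)
    (hle : ∀ k, pre D k ≤ pre χ k) (a b : ℕ) (hab : a + b = χ i + χ j) (ha : a ≤ 1) (hb : b ≤ 1)
    (k : ℕ) :
    pre (St D i j (D j) (D i)) k ≤ pre (St χ i j a b) k := by
  have hne : i ≠ j := by intro h; subst h; omega
  have e1 := pre_St D hne (D j) (D i) k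
  have e2 := pre_St χ hne a b k
  have hk := hle k
  by_cases hkj : k = j
  · have s1 := pre_succ D i
    have s2 := pre_succ χ i
    have s3 := pre_succ D j
    have s4 := pre_succ χ j
    have l1 := hle i
    have l2 := hle (j+1)
    rw [hij] at s1 s2
    subst hkj
    have := hD i
    have := hD j
    rw [if_pos (by omega), if_neg (by omega), if_pos (by omega), if_neg (by omega)] at e1 e2
    omega
  · split_ifs at e1 e2 <;> omega

theorem St_self {n : ℕ} (f : Fin n → ℕ) (i j : Fin n) : St f i j (f i) (f j) = f := by
  funext l
  simp only [St_apply]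
  grind

theorem PW.step {n : ℕ} {N : ℕ} {α β : Fin n → ℕ} {i j : Fin n} (hij : (i:ℕ) + 1 = j)
    (hα : α i < α j) {M t u : ℕ} (ht : t ≤ M) (hu : u ≤ M)
    (hP : PW N (St α i j (α j) (α i)) (St β i j t (M-t)))
    (htu : (t ≤ u ∧ u ≤ M - t) ∨ (M - t ≤ u ∧ u ≤ t)) : PW N α (St β i j u (M-u)) := by
  have hne : i ≠ j := by intro h; subst h; omega
  obtain ⟨χ, h1, h2, h3, h4⟩ := hP
  have hi : t = ∑ c ∈ Finset.range N, χ c i := by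
    have := congrFun h4 i; simpa [St_apply, hne] using this
  have hj : M - t = ∑ c ∈ Finset.range N, χ c j := by
    have := congrFun h4 j; simpa [St_apply, hne] using this
  have hl : ∀ l, l ≠ i → l ≠ j → β l = ∑ c ∈ Finset.range N, χ c l := by
    intro l hli hlj
    have := congrFun h4 l; simpa [St_apply, hli, hlj] using this
  have main : ∃ χ' : ℕ → Fin n → ℕ, 
      (∀ c, χ' c = χ c ∨ χ' c = St (χ c) i j (χ c j) (χ c i)) ∧
      (∑ c ∈ Finset.range N, χ' c i) = u ∧
      (∑ c ∈ Finset.range N, χ' c j) = M - u ∧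
      ∀ l, l ≠ i → l ≠ j → ∀ c, χ' c l = χ c l := by
    rcases htu with htu | htu
    · obtain ⟨χ', a1, a2, a3, a4⟩ := choose_cols N χ h1 j i hne.symm (u - t) (by omega)
      refine ⟨χ', ?_, by omega, by omega, fun l h h' => a4 l h' h⟩
      intro c
      rw [← St_swap _ hne]
      exact a1 c
    · obtain ⟨χ', a1, a2, a3, a4⟩ := choose_cols N χ h1 i j hne (t - u) (by omega)
      exact ⟨χ', a1, by omega, by omega, a4⟩
  obtain ⟨χ', a1, a2, a3, a4⟩ := main
  have a1' : ∀ c, ∃ a b, a + b = χ c i + χ c j ∧ a ≤ 1 ∧ b ≤ 1 ∧ χ' c = St (χ c) i j a b := by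
    intro c
    rcases a1 c with h | h
    · exact ⟨_, _, rfl, h1 _ _, h1 _ _, by rw [St_self]; exact h⟩
    · exact ⟨_, _, add_comm _ _, h1 _ _, h1 _ _, h⟩
  have hsky : ∀ c, sky α c = St (sky (St α i j (α j) (α i)) c) i j
      (sky (St α i j (α j) (α i)) c j) (sky (St α i j (α j) (α i)) c i) := by
    intro c
    funext l
    simp only [sky, St_apply]
    grind
  refine ⟨χ', ?_, ?_, ?_, ?_⟩
  · intro c l
    obtain ⟨a, b, -, ha, hb, e⟩ := a1' c
    rw [e, St_apply]
    split_ifs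
    · exact hb
    · exact ha
    · exact h1 c l
  · intro c k
    obtain ⟨a, b, hab, ha, hb, e⟩ := a1' c
    rw [e, hsky c]
    refine col_ok _ _ hij (h1 c) ?_ ?_ (h2 c) a b hab ha hb k
    · intro l; unfold sky; split_ifs <;> omega
    · simp only [sky, St_apply]
      simp only [if_true, if_neg hne]
      split_ifs <;> omega
  · intro c
    obtain ⟨a, b, hab, ha, hb, e⟩ := a1' c
    have e1 := pre_St (χ c) hne a b n
    rw [← e] at e1
    have e2 := pre_St (sky (St α i j (α j) (α i)) c) hne (sky (St α i j (α j) (α i)) c j) 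
      (sky (St α i j (α j) (α i)) c i) n
    rw [← hsky c] at e2
    have := h3 c
    simp only [i.isLt, j.isLt, if_true] at e1 e2
    omega
  · funext l
    rw [St_apply]
    split_ifs with b1 b2
    · subst b1; exact a3.symm
    · subst b2; exact a2.symm
    · rw [hl l b2 b1]
      exact Finset.sum_congr rfl fun c _ => (a4 l b2 b1 c).symm

theorem wsum_update {n : ℕ} (f : Fin n → ℕ) (i : Fin n) (t : ℕ) :
    (∑ l : Fin n, (l:ℕ) * Function.update f i t l) + i * f i = (∑ l : Fin n, (l:ℕ) * f l) + i * t := by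
  rw [← Finset.add_sum_erase _ _ (Finset.mem_univ i),
    ← Finset.add_sum_erase _ (fun l : Fin n => (l : ℕ) * f l) (Finset.mem_univ i)]
  have : ∑ x ∈ Finset.univ.erase i, ((x:ℕ) * Function.update f i t x) =
      ∑ x ∈ Finset.univ.erase i, ((x:ℕ) * f x) := by
    apply Finset.sum_congr rfl
    intro x hx
    rw [Function.update_of_ne (Finset.ne_of_mem_erase hx)]
  rw [this]
  simp
  omega

theorem key_induct {n : ℕ} (Q : (Fin n → ℕ) → Prop)
    (h0 : ∀ α : Fin n → ℕ, (∀ i j : Fin n, i ≤ j → α j ≤ α i) → Q α)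
    (h1 : ∀ (α : Fin n → ℕ) (i j : Fin n), (i : ℕ) + 1 = (j : ℕ) → α i < α j →
      Q (α ∘ Equiv.swap i j) → Q α) (α : Fin n → ℕ) : Q α := by
  induction hm : (∑ l : Fin n, (l:ℕ) * α l) using Nat.strong_induction_on generalizing α with
  | _ m ih =>
    by_cases hs : ∃ i j : Fin n, (i:ℕ) + 1 = j ∧ α i < α j
    · obtain ⟨i, j, hij, hlt⟩ := hs
      refine h1 α i j hij hlt (ih _ ?_ _ rfl)
      rw [comp_swap_eq, ← hm]
      have hne : j ≠ i := by intro h; subst h; omega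
      have e1 := wsum_update α i (α j)
      have e2 := wsum_update (Function.update α i (α j)) j (α i)
      rw [Function.update_of_ne hne] at e2
      unfold St
      rw [← hij] at e2
      nlinarith
    · push Not at hs
      apply h0
      have : ∀ d : ℕ, ∀ i j : Fin n, (i:ℕ) + d = j → α j ≤ α i := by
        intro d
        induction d with
        | zero => intro i j h; rw [Fin.ext (h : (i:ℕ) = j)]
        | succ d ihd =>
          intro i j h
          have hlt : (i:ℕ) + d < n := by omega
          exact (hs ⟨i + d, hlt⟩ j (by simp; omega)).trans (ihd i ⟨i+d, hlt⟩ rfl)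
      intro i j hij
      exact this (j - i) i j (by have : (i:ℕ) ≤ j := hij; omega)

theorem cf_sorted {n : ℕ} (α β : Fin n → ℕ) :
    cf (∏ i, X i ^ α i) β = if α = β then 1 else 0 := by
  unfold cf
  have : (∏ i, X i ^ α i : MvPolynomial (Fin n) ℤ) = monomial (Finsupp.equivFunOnFinite.symm α) 1 := by
    rw [monomial_eq, Finsupp.prod_fintype _ _ (by simp)]
    simp
  rw [this, coeff_monomial]
  simp

theorem key_supp {n : ℕ} {K : (Fin n → ℕ) → MvPolynomial (Fin n) ℤ} (hK : IsKeyFamily K)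
    (N : ℕ) (α : Fin n → ℕ) : (∀ l, α l ≤ N) → ∀ β, cf (K α) β ≠ 0 → PW N α β := by
  induction α using key_induct with
  | h0 α hs =>
    intro hN β hβ
    rw [hK.1 α hs, cf_sorted] at hβ
    have : α = β := by by_contra h; simp [h] at hβ
    subst this
    exact PW.refl hN
  | h1 α i j hij hlt ih =>
    intro hN β hβ
    have hne : i ≠ j := by intro h; subst h; omega
    have e : β = St β i j (β i) (β i + β j - β i) := by
      rw [Nat.add_sub_cancel_left, St_self]
    rw [e] at hβ
    obtain ⟨t, ht, hne', htu⟩ := string_supp _ _ hne (hK.2 α i j hij hlt) β _ _ (by omega) hβ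
    have := ih (fun l => hN _) _ hne'
    rw [comp_swap_eq] at this
    rw [e]
    exact this.step hij hlt ht (by omega) htu

/-- the convenient form of the recursion -/
theorem key_single {n : ℕ} {K : (Fin n → ℕ) → MvPolynomial (Fin n) ℤ} (hK : IsKeyFamily K)
    (α β : Fin n → ℕ) (i j : Fin n) (hij : (i : ℕ) + 1 = (j : ℕ)) (hlt : α i < α j)
    (M T : ℕ) (hM : M = β i + β j) (hT : β i ≤ T) (hT' : β j ≤ T) (hTM : T ≤ M)
    (h0 : ∀ t ≤ M, t ≠ T → cf (K (St α i j (α j) (α i))) (St β i j t (M-t)) = 0) :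
    cf (K α) β = cf (K (St α i j (α j) (α i))) (St β i j T (M-T)) := by
  have hne : i ≠ j := by intro h; subst h; omega
  have e : β = St β i j (β i) (M - β i) := by
    rw [hM, Nat.add_sub_cancel_left, St_self]
  conv_lhs => rw [e]
  rw [string_formula _ _ hne (hK.2 α i j hij hlt) β _ _ (by omega), comp_swap_eq,
    Finset.sum_eq_single T, Finset.sum_eq_zero, sub_zero]
  · intro t ht
    rw [Finset.mem_range] at ht
    exact h0 t (by omega) (by omega)
  · intro t ht htT
    rw [Finset.mem_Ico] at ht
    exact h0 t (by omega) htT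
  · intro h
    rw [Finset.mem_Ico] at h
    omega

theorem key_double {n : ℕ} {K : (Fin n → ℕ) → MvPolynomial (Fin n) ℤ} (hK : IsKeyFamily K)
    (α β : Fin n → ℕ) (i j : Fin n) (hij : (i : ℕ) + 1 = (j : ℕ)) (hlt : α i < α j)
    (M T : ℕ) (hM : M = β i + β j) (hT : β i ≤ T) (hT' : β j ≤ T) (hTM : T + 1 ≤ M)
    (h0 : ∀ t ≤ M, t ≠ T → t ≠ T + 1 →
      cf (K (St α i j (α j) (α i))) (St β i j t (M-t)) = 0) :
    cf (K α) β = cf (K (St α i j (α j) (α i))) (St β i j T (M-T)) +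
      cf (K (St α i j (α j) (α i))) (St β i j (T+1) (M-(T+1))) := by
  have hne : i ≠ j := by intro h; subst h; omega
  have e : β = St β i j (β i) (M - β i) := by
    rw [hM, Nat.add_sub_cancel_left, St_self]
  conv_lhs => rw [e]
  rw [string_formula _ _ hne (hK.2 α i j hij hlt) β _ _ (by omega), comp_swap_eq,
    ← Finset.sum_subset (s₁ := {T, T+1}), Finset.sum_pair (by omega), Finset.sum_eq_zero, sub_zero]
  · intro t ht
    rw [Finset.mem_range] at ht
    exact h0 t (by omega) (by omega) (by omega)
  · intro t ht
    simp at ht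
    rw [Finset.mem_Ico]
    omega
  · intro t ht htT
    rw [Finset.mem_Ico] at ht
    simp at htT
    exact h0 t (by omega) (by omega) (by omega)

theorem zero_of_pre {n : ℕ} {K : (Fin n → ℕ) → MvPolynomial (Fin n) ℤ} (hK : IsKeyFamily K)
    (α γ : Fin n → ℕ) (k : ℕ) (h : pre γ k < pre α k) : cf (K α) γ = 0 := by
  by_contra h'
  have hN : ∀ l, α l ≤ Finset.univ.sup α := fun l => Finset.le_sup (f := α) (Finset.mem_univ l)
  have := (key_supp hK _ α hN γ h').pre_le hN k
  omega

theorem zero_of_max {n : ℕ} {K : (Fin n → ℕ) → MvPolynomial (Fin n) ℤ} (hK : IsKeyFamily K)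
    (α γ : Fin n → ℕ) {p q : ℕ} (hpq : p ≤ q) (hp : pre α p = pre γ p) (hq : pre α q = pre γ q)
    (M : ℕ) (hM : ∀ l : Fin n, p ≤ (l:ℕ) → (l:ℕ) < q → α l ≤ M) (l : Fin n) (hl : p ≤ (l:ℕ))
    (hl' : (l:ℕ) < q) (h : M < γ l) : cf (K α) γ = 0 := by
  by_contra h'
  have hN : ∀ l, α l ≤ Finset.univ.sup α := fun l => Finset.le_sup (f := α) (Finset.mem_univ l)
  have := (key_supp hK _ α hN γ h').max hN hpq hp hq M hM l hl hl'
  omega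

theorem zero_of_max_two {n : ℕ} {K : (Fin n → ℕ) → MvPolynomial (Fin n) ℤ} (hK : IsKeyFamily K)
    (α γ : Fin n → ℕ) {p q : ℕ} (hpq : p ≤ q) (hp : pre α p = pre γ p) (hq : pre α q = pre γ q)
    (A : ℕ) (r : Fin n) (hr : α r ≤ A + 1)
    (hM : ∀ l : Fin n, p ≤ (l:ℕ) → (l:ℕ) < q → l ≠ r → α l ≤ A) (l l' : Fin n)
    (hne : l ≠ l') (hl : p ≤ (l:ℕ))
    (hl' : (l:ℕ) < q) (hm : p ≤ (l':ℕ)) (hm' : (l':ℕ) < q) (h : 2 * A + 2 ≤ γ l + γ l') :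
    cf (K α) γ = 0 := by
  by_contra h'
  have hN : ∀ l, α l ≤ Finset.univ.sup α := fun l => Finset.le_sup (f := α) (Finset.mem_univ l)
  have := (key_supp hK _ α hN γ h').max_two hN hpq hp hq A r hr hM l l' hne hl hl' hm hm'
  omega

theorem St_St {n : ℕ} (f : Fin n → ℕ) (i j : Fin n) (t s t' s' : ℕ) :
    St (St f i j t s) i j t' s' = St f i j t' s' := by
  funext l
  simp only [St_apply]
  grind

theorem key_adj' {n : ℕ} {K : (Fin n → ℕ) → MvPolynomial (Fin n) ℤ} (hK : IsKeyFamily K)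
    (α : Fin n → ℕ) (i j : Fin n) (hij : (i : ℕ) + 1 = (j : ℕ)) (hlt : α i < α j) (u : ℕ)
    (hu : α i ≤ u) (hu' : u ≤ α j) :
    cf (K α) (St α i j u (α i + α j - u)) =
      cf (K (St α i j (α j) (α i))) (St α i j (α j) (α i)) := by
  have hne : i ≠ j := by intro h; subst h; omega
  rw [key_single hK α _ i j hij hlt (α i + α j) (α j)]
  · rw [St_St, Nat.add_sub_cancel]
  · simp [St_apply, hne]; omega
  · simp [St_apply, hne]; omega
  · simp [St_apply]; omega
  · omega
  intro t ht htne
  rw [St_St]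
  have e1 := fun k => pre_St α hne t (α i + α j - t) k
  have e2 := fun k => pre_St α hne (α j) (α i) k
  rcases lt_or_gt_of_ne htne with h | h
  · apply zero_of_pre hK _ _ j
    have e1 := e1 j
    have e2 := e2 j
    split_ifs at e1 e2 <;> omega
  · apply zero_of_max hK _ _ (p := i) (q := j+1) (by omega) _ _ (α j) _ i le_rfl (by omega)
    · simp [St_apply, hne]; omega
    · have e1 := e1 i
      have e2 := e2 i
      split_ifs at e1 e2 <;> omega
    · have e1 := e1 (j+1)
      have e2 := e2 (j+1)
      split_ifs at e1 e2 <;> omega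
    · intro l h1 h2
      rw [St_apply]
      split_ifs with h3 h4
      · omega
      · omega
      · exfalso
        rw [Fin.ext_iff] at h3 h4
        omega

theorem key_lead {n : ℕ} {K : (Fin n → ℕ) → MvPolynomial (Fin n) ℤ} (hK : IsKeyFamily K)
    (α : Fin n → ℕ) : cf (K α) α = 1 := by
  induction α using key_induct with
  | h0 α hs => rw [hK.1 α hs, cf_sorted]; simp
  | h1 α i j hij hlt ih =>
    have := key_adj' hK α i j hij hlt (α i) le_rfl hlt.le
    rw [Nat.add_sub_cancel_left, St_self] at this
    rw [this, ← comp_swap_eq, ih]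

theorem key_adj {n : ℕ} {K : (Fin n → ℕ) → MvPolynomial (Fin n) ℤ} (hK : IsKeyFamily K)
    (α : Fin n → ℕ) (i j : Fin n) (hij : (i : ℕ) + 1 = (j : ℕ)) (hlt : α i < α j) :
    cf (K α) (St α i j (α i + 1) (α j - 1)) = 1 := by
  have := key_adj' hK α i j hij hlt (α i + 1) (by omega) (by omega)
  rw [key_lead hK] at this
  rw [← this]
  congr 2
  omega

theorem key_Y {n : ℕ} {K : (Fin n → ℕ) → MvPolynomial (Fin n) ℤ} (hK : IsKeyFamily K)
    (d : ℕ) : ∀ (α : Fin n → ℕ) (i j : Fin n), (i:ℕ) + 1 + d = j → α j = α i + 1 →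
    (∀ l, i < l → l < j → α l ≤ α i) →
    cf (K α) (St α i j (α i + 1) (α j - 1)) = 1 := by
  induction d with
  | zero =>
    intro α i j hij hα _
    exact key_adj hK α i j hij (by omega)
  | succ d ih =>
    intro α i j hij hα hb
    obtain ⟨k, hk⟩ : ∃ k : Fin n, (k:ℕ) + 1 = j := ⟨⟨j - 1, by omega⟩, by simp; omega⟩
    have hik : i ≠ k := by intro h; subst h; omega
    have hij' : i ≠ j := by intro h; subst h; omega
    have hkj : k ≠ j := by intro h; subst h; omega
    have hαk : α k ≤ α i := hb k (by rw [Fin.lt_def]; omega) (by rw [Fin.lt_def]; omega)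
    have b1 : St α i j (α i + 1) (α j - 1) k = α k := by simp [St_apply, hkj, hik.symm]
    have b2 : St α i j (α i + 1) (α j - 1) j = α i := by simp [St_apply]; omega
    rw [key_single hK α _ k j hk (by omega) (α k + α i) (α i) (by omega) (by omega) (by omega)
      (by omega)]
    · have := ih (St α k j (α j) (α k)) i k (by omega) (by simp [St_apply, hik, hkj, hij', hα]) ?_
      · rw [← this]
        congr 1
        funext l
        simp only [St_apply]
        grind
      · intro l h1 h2
        have h3 : l ≠ j := by intro h; subst h; rw [Fin.lt_def] at h2; omega
        have h4 := h2.ne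
        simp only [St_apply, h3, h4, hij', hik, if_false]
        exact hb l h1 (h2.trans (by rw [Fin.lt_def]; omega))
    intro t ht htne
    have e1 := fun m => pre_St α hkj (α j) (α k) m
    have e2 := fun m => pre_St α hij' (α i + 1) (α j - 1) m
    have e3 := fun m => pre_St (St α i j (α i + 1) (α j - 1)) hkj t (α k + α i - t) m
    rw [b1, b2] at e3
    rcases lt_or_gt_of_ne htne with h | h
    · apply zero_of_pre hK _ _ j
      have e1 := e1 j
      have e2 := e2 j
      have e3 := e3 j
      split_ifs at e1 e2 e3 <;> omega
    · apply zero_of_max_two hK _ _ (p := i) (q := j+1) (by omega) _ _ (α i) k _ _ i k hik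
        le_rfl (by omega) (by omega) (by omega)
      · simp [St_apply, hik, hkj, hij']; omega
      · have e1 := e1 i
        have e2 := e2 i
        have e3 := e3 i
        split_ifs at e1 e2 e3 <;> omega
      · have e1 := e1 (j+1)
        have e2 := e2 (j+1)
        have e3 := e3 (j+1)
        split_ifs at e1 e2 e3 <;> omega
      · simp [St_apply, hkj, hα]
      · intro l h1 h2 h3
        rw [St_apply, if_neg h3]
        split_ifs with h4
        · exact hαk
        · by_cases h5 : l = i
          · rw [h5]
          · refine hb l ?_ ?_
            · rw [Fin.lt_def]; rw [Fin.ext_iff] at h5; omega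
            · rw [Fin.lt_def]; rw [Fin.ext_iff] at h4; omega

theorem key_X {n : ℕ} {K : (Fin n → ℕ) → MvPolynomial (Fin n) ℤ} (hK : IsKeyFamily K)
    (d : ℕ) : ∀ (α : Fin n → ℕ) (i j : Fin n), (i:ℕ) + 1 + d = j → α i + 2 ≤ α j →
    (∀ l, i < l → l < j → α l = α i + 1 ∧ α j = α i + 2) →
    cf (K α) (St α i j (α i + 1) (α j - 1)) = d + 1 := by
  induction d with
  | zero =>
    intro α i j hij hα _
    rw [key_adj hK α i j hij (by omega)]
    simp
  | succ d ih =>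
    intro α i j hij hα hb
    obtain ⟨k, hk⟩ : ∃ k : Fin n, (i:ℕ) + 1 = k := ⟨⟨i + 1, by omega⟩, by simp⟩
    have hik : i ≠ k := by intro h; subst h; omega
    have hij' : i ≠ j := by intro h; subst h; omega
    have hkj : k ≠ j := by intro h; subst h; omega
    obtain ⟨hαk, hαj⟩ := hb k (by rw [Fin.lt_def]; omega) (by rw [Fin.lt_def]; omega)
    have b1 : St α i j (α i + 1) (α j - 1) i = α i + 1 := by simp [St_apply, hij']
    have b2 : St α i j (α i + 1) (α j - 1) k = α i + 1 := by simp [St_apply, hkj, hik.symm, hαk]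
    rw [key_double hK α _ i k hk (by omega) (2 * α i + 2) (α i + 1) (by omega) (by omega)
      (by omega) (by omega)]
    · have h1 := ih (St α i k (α k) (α i)) k j (by omega) ?_ ?_
      have h2 := key_Y hK (d+1) (St α i k (α k) (α i)) i j hij ?_ ?_
      · push_cast
        rw [← h1, ← h2]
        congr 2
        · funext l
          simp only [St_apply]
          grind
        · funext l
          simp only [St_apply]
          grind
      · simp [St_apply, hik, hkj.symm, hij'.symm, hαk, hαj]
      · intro l h1 h2
        simp only [St_apply, hik, h1.ne', if_true, if_false]
        split_ifs
        · omega
        · rw [(hb l h1 h2).1, hαk]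
      · simp [St_apply, hkj.symm, hij'.symm, hαj]
      · intro l h1 h2
        have h3 : i < l := lt_trans (by rw [Fin.lt_def]; omega) h1
        simp only [St_apply, h1.ne', h3.ne', hkj.symm, hij'.symm, if_true, if_false]
        exact hb l h3 h2
    intro t ht htne htne'
    have e1 := fun m => pre_St α hik (α k) (α i) m
    have e2 := fun m => pre_St α hij' (α i + 1) (α j - 1) m
    have e3 := fun m => pre_St (St α i j (α i + 1) (α j - 1)) hik t (2 * α i + 2 - t) m
    rw [b1, b2] at e3
    rcases lt_or_gt_of_ne htne with h | h
    · apply zero_of_pre hK _ _ k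
      have e1 := e1 k
      have e2 := e2 k
      have e3 := e3 k
      split_ifs at e1 e2 e3 <;> omega
    · apply zero_of_max hK _ _ (p := i) (q := j+1) (by omega) _ _ (α i + 2) _ i
        le_rfl (by omega)
      · simp [St_apply, hik]; omega
      · have e1 := e1 i
        have e2 := e2 i
        have e3 := e3 i
        split_ifs at e1 e2 e3 <;> omega
      · have e1 := e1 (j+1)
        have e2 := e2 (j+1)
        have e3 := e3 (j+1)
        split_ifs at e1 e2 e3 <;> omega
      · intro l h1 h2
        rw [St_apply]
        split_ifs with h3 h4
        · omega
        · omega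
        · by_cases h5 : l = j
          · rw [h5]; omega
          · have := (hb l ?_ ?_).1
            · omega
            · rw [Fin.lt_def]; rw [Fin.ext_iff] at h4; omega
            · rw [Fin.lt_def]; rw [Fin.ext_iff] at h5; omega

theorem gale_of_counts {n : ℕ} (C D : Finset (Fin n)) (hc : C.card = D.card)
    (h : ∀ k : ℕ, (D.filter (fun r : Fin n => (r:ℕ) < k)).card ≤ (C.filter (fun r : Fin n => (r:ℕ) < k)).card) :
    GaleLE C D := by
  refine ⟨hc, fun k hC hD => ?_⟩
  by_contra hlt
  rw [not_le] at hlt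
  set d : Fin n := (D.orderIsoOfFin rfl ⟨k, hD⟩ : Fin n) with hd
  have h1 : k + 1 ≤ (D.filter (fun r : Fin n => (r:ℕ) < d + 1)).card := by
    have : (Finset.univ.filter (fun x : Fin D.card => (x:ℕ) < k + 1)).card = k + 1 := by
      rw [Fin.card_filter_val_lt]; omega
    rw [← this]
    apply Finset.card_le_card_of_injOn (fun x => (D.orderIsoOfFin rfl x : Fin n))
    · intro x hx
      simp only [Finset.coe_filter, Finset.mem_univ, true_and, Set.mem_ofPred_eq] at hx
      have hx' : x ≤ ⟨k, hD⟩ := by rw [Fin.le_def]; simp; omega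
      have : (D.orderIsoOfFin rfl x : Fin n) ≤ d :=
        Subtype.coe_le_coe.2 ((D.orderIsoOfFin rfl).le_iff_le.2 hx')
      simp only [Finset.coe_filter, Set.mem_ofPred_eq]
      exact ⟨Subtype.coe_prop _, by rw [Fin.le_def] at this; omega⟩
    · intro x _ y _ hxy
      exact (D.orderIsoOfFin rfl).injective (Subtype.ext hxy)
  have h2 : (C.filter (fun r : Fin n => (r:ℕ) < d + 1)).card ≤ k := by
    have : (Finset.univ.filter (fun x : Fin C.card => (x:ℕ) < k)).card = k := by
      rw [Fin.card_filter_val_lt]; omega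
    conv_rhs => rw [← this]
    apply Finset.card_le_card_of_surjOn (fun x => (C.orderIsoOfFin rfl x : Fin n))
    intro r hr
    simp only [Finset.coe_filter, Set.mem_ofPred_eq] at hr
    obtain ⟨x, hx⟩ := (C.orderIsoOfFin rfl).surjective ⟨r, hr.1⟩
    refine ⟨x, ?_, by simp [hx]⟩
    simp only [Finset.coe_filter, Finset.mem_univ, true_and, Set.mem_ofPred_eq]
    by_contra hk
    have hx' : (⟨k, hC⟩ : Fin C.card) ≤ x := by rw [Fin.le_def]; simp; omega
    have h3 : (C.orderIsoOfFin rfl ⟨k, hC⟩ : Fin n) ≤ (C.orderIsoOfFin rfl x : Fin n) :=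
      Subtype.coe_le_coe.2 ((C.orderIsoOfFin rfl).le_iff_le.2 hx')
    rw [hx] at h3
    have h4 := lt_of_lt_of_le hlt h3
    rw [Fin.lt_def] at h4
    simp only at h4
    omega
  have := h (d + 1)
  omega

/-- row weights of a diagram -/
def wt {n : ℕ} (C : Fin n → Finset (Fin n)) (r : Fin n) : ℕ :=
  ∑ c : Fin n, if r ∈ C c then 1 else 0

theorem cf_xDiagram {n : ℕ} (C : Fin n → Finset (Fin n)) (β : Fin n → ℕ) :
    cf (xDiagram C) β = if wt C = β then 1 else 0 := by
  rw [← cf_sorted]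
  congr 1
  unfold xDiagram
  have : ∀ c : Fin n, (∏ i ∈ C c, X i : MvPolynomial (Fin n) ℤ) =
      ∏ i, X i ^ (if i ∈ C c then 1 else 0) := by
    intro c
    simp [Finset.prod_ite_mem, pow_ite]
  simp only [this]
  rw [Finset.prod_comm]
  apply Finset.prod_congr rfl
  intro i _
  rw [Finset.prod_pow_eq_pow_sum]
  rfl

open scoped Classical in
theorem cf_MaxPoly {n : ℕ} (D : Fin n → Finset (Fin n)) (β : Fin n → ℕ) :
    cf (MaxPoly D) β =
      ((Finset.univ.filter (fun C => DiagramLE C D ∧ wt C = β)).card : ℤ) := by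
  have : cf (MaxPoly D) β = ∑ C ∈ Finset.univ.filter
      (fun C : Fin n → Finset (Fin n) => DiagramLE C D), cf (xDiagram C) β := by
    unfold cf MaxPoly
    rw [coeff_sum]
  rw [this]
  simp only [cf_xDiagram]
  rw [← Finset.filter_filter]
  simp

/-- the family of diagrams witnessing a big coefficient. -/
def Ed {n : ℕ} (α : Fin n → ℕ) (i j l : Fin n) (c : Fin n) : Finset (Fin n) :=
  if (c:ℕ) = α i then (insert i (skyline α c)).erase l
  else if (c:ℕ) = α i + 1 then insert l ((skyline α c).erase j)
  else skyline α c

theorem Ed_id {n : ℕ} (α : Fin n → ℕ) (i j : Fin n) (hα : α i + 2 ≤ α j) 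
    (hb : ∀ l, i < l → l < j → α l = α i + 1) (l : Fin n) (hil : i ≤ l) (hlj : l ≤ j)
    (c r : Fin n) :
    (if r ∈ Ed α i j l c then 1 else 0) + (if (c:ℕ) = α i ∧ r = l then 1 else 0)
      + (if (c:ℕ) = α i + 1 ∧ r = j then 1 else 0) =
    (if r ∈ skyline α c then 1 else 0) + (if (c:ℕ) = α i ∧ r = i then 1 else 0)
      + (if (c:ℕ) = α i + 1 ∧ r = l then 1 else 0) := by
  have hl : (l = i ∧ α l = α i) ∨ (l = j ∧ α l = α j) ∨ (l ≠ i ∧ l ≠ j ∧ α l = α i + 1) := by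
    rcases eq_or_lt_of_le hil with h | h
    · left; rw [← h]; simp
    · rcases eq_or_lt_of_le hlj with h' | h'
      · right; left; rw [h']; simp
      · right; right; exact ⟨h.ne', h'.ne, hb l h h'⟩
  have hij : i ≠ j := by intro h; subst h; omega
  by_cases h1 : (c:ℕ) = α i
  · have e : Ed α i j l c = (insert i (skyline α c)).erase l := by simp [Ed, h1]
    rw [e]
    simp only [Finset.mem_erase, Finset.mem_insert, skyline, Finset.mem_filter, Finset.mem_univ,
      true_and, h1]
    by_cases hrl : r = l
    · subst hrl
      by_cases hri : r = i
      · subst hri; simp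
      · have : α i < α r := by
          rcases hl with h | h | h
          · exact absurd h.1 hri
          · omega
          · omega
        simp [hri, this]
    · by_cases hri : r = i
      · subst hri; simp [hrl]
      · simp [hri, hrl]
  · by_cases h2 : (c:ℕ) = α i + 1
    · have e : Ed α i j l c = insert l ((skyline α c).erase j) := by simp [Ed, h2]
      rw [e]
      simp only [Finset.mem_erase, Finset.mem_insert, skyline, Finset.mem_filter, Finset.mem_univ,
        true_and, h2]
      by_cases hrl : r = l
      · subst hrl
        by_cases hrj : r = j
        · subst hrj
          have : α i + 1 < α r := by omega
          simp [this]
        · have : ¬ (α i + 1 < α r) := by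
            rcases hl with h | h | h
            · omega
            · exact absurd h.1 hrj
            · omega
          simp [hrj, this]
      · by_cases hrj : r = j
        · subst hrj
          have : α i + 1 < α r := by omega
          simp [hrl, this]
        · simp [hrj, hrl]
    · simp [Ed, h1, h2]

theorem wt_skyline {n : ℕ} (α : Fin n → ℕ) (h : ∀ l, α l ≤ n) : wt (skyline α) = α := by
  funext r
  have := congrFun (sum_sky α n h) r
  conv_rhs => rw [← this]
  unfold wt
  rw [← Fin.sum_univ_eq_sum_range (fun c => sky α c r) n]
  simp [sky, skyline]

theorem wt_Ed {n : ℕ} (α : Fin n → ℕ) (hn : ∀ l, α l ≤ n) (i j : Fin n) (hij : i < j)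
    (hα : α i + 2 ≤ α j) 
    (hb : ∀ l, i < l → l < j → α l = α i + 1) (l : Fin n) (hil : i ≤ l) (hlj : l ≤ j) :
    wt (Ed α i j l) = St α i j (α i + 1) (α j - 1) := by
  funext r
  have h1 : α i < n := by have := hn j; omega
  have h2 : α i + 1 < n := by have := hn j; omega
  have aux : ∀ a < n, ∀ x : Fin n, 
      (∑ c : Fin n, if (c:ℕ) = a ∧ r = x then 1 else 0) = if r = x then 1 else 0 := by
    intro a ha x
    rw [Finset.sum_eq_single ⟨a, ha⟩]
    · simp
    · intro b _ hb
      rw [if_neg]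
      rintro ⟨h, -⟩
      exact hb (Fin.ext h)
    · simp
  have := Finset.sum_congr (rfl : (Finset.univ : Finset (Fin n)) = Finset.univ)
    (fun c _ => Ed_id α i j hα hb l hil hlj c r)
  simp only [Finset.sum_add_distrib, aux _ h1, aux _ h2] at this
  have e := congrFun (wt_skyline α hn) r
  unfold wt at e ⊢
  rw [e] at this
  rw [St_apply]
  have hne := hij.ne
  by_cases hrj : r = j
  · subst hrj
    simp only [if_true, if_neg hne.symm] at this ⊢
    omega
  · by_cases hri : r = i
    · subst hri
      simp only [if_true, if_neg hne] at this ⊢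
      omega
    · simp only [if_neg hri, if_neg hrj] at this ⊢
      omega

theorem le_Ed {n : ℕ} (α : Fin n → ℕ) (i j : Fin n)
    (hα : α i + 2 ≤ α j) 
    (hb : ∀ l, i < l → l < j → α l = α i + 1) (l : Fin n) (hil : i ≤ l) (hlj : l ≤ j) :
    DiagramLE (Ed α i j l) (skyline α) := by
  intro c
  have aux : ∀ k : ℕ, ∀ p : Prop, ∀ _ : Decidable p, ∀ x : Fin n,
      (∑ r : Fin n, if (r:ℕ) < k then (if p ∧ r = x then 1 else 0) else 0) =
        if (x:ℕ) < k ∧ p then 1 else 0 := by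
    intro k p _ x
    rw [Finset.sum_eq_single x]
    · by_cases p <;> simp_all
    · intro b _ hb
      simp [hb]
    · simp
  have cnt : ∀ (S : Finset (Fin n)) (k : ℕ), (S.filter (fun r : Fin n => (r:ℕ) < k)).card =
      ∑ r : Fin n, if (r:ℕ) < k then (if r ∈ S then 1 else 0) else 0 := by
    intro S k
    rw [← Finset.sum_filter, ← Finset.card_filter, Finset.filter_filter]
    congr 1
    ext r
    simp [and_comm]
  have key : ∀ k : ℕ, ((Ed α i j l c).filter (fun r : Fin n => (r:ℕ) < k)).card
      + (if (l:ℕ) < k ∧ (c:ℕ) = α i then 1 else 0) + (if (j:ℕ) < k ∧ (c:ℕ) = α i + 1 then 1 else 0)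
      = ((skyline α c).filter (fun r : Fin n => (r:ℕ) < k)).card
      + (if (i:ℕ) < k ∧ (c:ℕ) = α i then 1 else 0) +
        (if (l:ℕ) < k ∧ (c:ℕ) = α i + 1 then 1 else 0) := by
    intro k
    rw [cnt, cnt, ← aux k _ _ l, ← aux k _ _ j, ← aux k _ _ i, ← aux k _ _ l]
    simp only [← Finset.sum_add_distrib]
    apply Finset.sum_congr rfl
    intro r _
    have := Ed_id α i j hα hb l hil hlj c r
    by_cases hr : (r:ℕ) < k
    · simp only [if_pos hr]; exact this
    · simp only [if_neg hr]
  rw [Fin.le_def] at hil hlj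
  apply gale_of_counts
  · have := key n
    rw [Finset.filter_true_of_mem (fun x _ => x.isLt),
      Finset.filter_true_of_mem (fun x _ => x.isLt)] at this
    simp only [Fin.is_lt, true_and] at this
    omega
  · intro k
    have := key k
    split_ifs at this <;> omega

theorem Ed_inj {n : ℕ} (α : Fin n → ℕ) (hn : ∀ l, α l ≤ n) (i j : Fin n) 
    (hα : α i + 2 ≤ α j)
    (hb : ∀ l, i < l → l < j → α l = α i + 1) :
    Set.InjOn (Ed α i j) (Finset.Icc i j : Finset (Fin n)) := by
  intro l hl l' hl' h
  simp only [Finset.coe_Icc, Set.mem_Icc] at hl hl'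
  have h2 : α i + 1 < n := by have := hn j; omega
  have key : ∀ l, i ≤ l → l ≤ j → l ∉ ((skyline α ⟨α i + 1, h2⟩).erase j) := by
    intro l h1 h3 hm
    simp only [Finset.mem_erase, skyline, Finset.mem_filter, Finset.mem_univ, true_and] at hm
    have h4 := lt_of_le_of_ne h3 hm.1
    rcases eq_or_lt_of_le h1 with h5 | h5
    · subst h5; omega
    · have := hb l h5 h4
      omega
  have e := congrFun h ⟨α i + 1, h2⟩
  simp only [Ed] at e
  simp only [Nat.succ_ne_self, if_true, if_false] at e
  have hm : l ∈ insert l' ((skyline α ⟨α i + 1, h2⟩).erase j) := by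
    rw [← e]; exact Finset.mem_insert_self _ _
  rcases Finset.mem_insert.1 hm with h' | h'
  · exact h'
  · exact absurd h' (key l hl.1 hl.2)

theorem Max_big {n : ℕ} (α : Fin n → ℕ) (hn : ∀ l, α l ≤ n) (i j : Fin n) (hij : i < j)
    (hα : α i + 2 ≤ α j) (hb : ∀ l, i < l → l < j → α l = α i + 1) :
    ((j:ℕ) + 1 - i : ℤ) ≤ cf (MaxPoly (skyline α)) (St α i j (α i + 1) (α j - 1)) := by
  classical
  rw [cf_MaxPoly]
  have : (Finset.Icc i j).card = (j:ℕ) + 1 - i := Fin.card_Icc i j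
  have h2 : (Finset.Icc i j).card ≤ (Finset.univ.filter (fun C => DiagramLE C (skyline α) ∧
      wt C = St α i j (α i + 1) (α j - 1))).card := by
    apply Finset.card_le_card_of_injOn (Ed α i j)
    · intro l hl
      simp only [Finset.coe_Icc, Set.mem_Icc] at hl
      simp only [Finset.coe_filter, Finset.mem_univ, true_and, Set.mem_ofPred_eq]
      exact ⟨le_Ed α i j hα hb l hl.1 hl.2, wt_Ed α hn i j hij hα hb l hl.1 hl.2⟩
    · exact Ed_inj α hn i j hα hb
  rw [Fin.lt_def] at hij
  have h3 : ((j:ℕ) + 1 - i : ℤ) = (((j:ℕ) + 1 - i : ℕ) : ℤ) := by omega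
  rw [h3]
  rw [this] at h2
  convert Int.ofNat_le.2 h2

/-- If the key polynomial `κ_α` equals the upper bound `Max_α`, then `α` avoids the
composition pattern `(0,2)`. -/
theorem avoids_02_of_key_eq_max (n : ℕ) (hn : 1 ≤ n) (α : Fin n → ℕ)
    (K : (Fin n → ℕ) → MvPolynomial (Fin n) ℤ) (hK : IsKeyFamily K)
    (h : K α = MaxPoly (skyline α)) :
    AvoidsZeroTwo α := by
  classical
  rintro ⟨i₀, j₀, hij₀, hα₀⟩
  have hle : ∀ l, α l ≤ n := by
    have h1 := key_lead hK α
    rw [h, cf_MaxPoly] at h1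
    have h2 := Nat.lt_of_lt_of_eq Nat.zero_lt_one (Int.ofNat_inj.1 h1).symm
    obtain ⟨C, hC⟩ := Finset.card_pos.1 h2
    have hw := (Finset.mem_filter.1 hC).2.2
    intro l
    rw [← hw]
    unfold wt
    calc _ ≤ ∑ c : Fin n, 1 := Finset.sum_le_sum (fun c _ => by split_ifs <;> omega)
      _ = n := by simp
  have hex : ∃ d : ℕ, ∃ i j : Fin n, (i:ℕ) + 1 + d = j ∧ α i + 2 ≤ α j :=
    ⟨j₀ - i₀ - 1, i₀, j₀, by rw [Fin.lt_def] at hij₀; omega, hα₀⟩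
  obtain ⟨i, j, hij, hα⟩ := Nat.find_spec hex
  have hmin := fun m hm => Nat.find_min hex (m := m) hm
  generalize Nat.find hex = d at hij hmin
  have hb : ∀ l, i < l → l < j → α l = α i + 1 ∧ α j = α i + 2 := by
    intro l h1 h2
    rw [Fin.lt_def] at h1 h2
    have h3 : ¬ (α i + 2 ≤ α l) := fun h3 =>
      hmin (l - i - 1) (by omega) ⟨i, l, by omega, h3⟩
    have h4 : ¬ (α l + 2 ≤ α j) := fun h3 =>
      hmin (j - l - 1) (by omega) ⟨l, j, by omega, h3⟩
    omega
  have e1 := key_X hK d α i j hij hα hb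
  have e2 := Max_big α hle i j (by rw [Fin.lt_def]; omega) hα (fun l h1 h2 => (hb l h1 h2).1)
  rw [← h, e1] at e2
  omega
end

section
/- Let n ≥ 1 and let w be a permutation of [n]. Then the coefficient-wise inequalities Min_w(x) ≤ S_w(x) ≤ Max_w(x) hold in ℤ[x_1,…,x_n]; that is, for every monomial x^β, the coefficient of x^β in S_w(x) is at least 1 if there exists a diagram C ≤ D(w) with x^C = x^β, and the coefficient of x^β in S_w(x) is at most the number of diagrams C ≤ D(w) with x^C = x^β. -/
open MvPolynomial

/-- The Rothe diagram of a permutation `w` (0-indexed): column `j` consists of the rows `i`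
with `w i > j` and `i < w⁻¹ j`. -/
def rothe {n : ℕ} (w : Equiv.Perm (Fin n)) (j : Fin n) : Finset (Fin n) :=
  Finset.univ.filter fun i => j < w i ∧ i < w.symm j

/-- `S` is the family of Schubert polynomials: `S_{w₀} = x_1^{n-1} ⋯ x_{n-1}` for the longest
permutation `w₀` (i.e. `Fin.revPerm`), and whenever `w_i < w_{i+1}`,
`S_w = ∂_i S_{w s_i}`, expressed denominator-free as
`(x_i - x_{i+1}) S_w = S_{w s_i} - s_i · S_{w s_i}`. -/
def IsSchubertFamily {n : ℕ} (S : Equiv.Perm (Fin n) → MvPolynomial (Fin n) ℤ) : Prop :=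
  S Fin.revPerm = (∏ i : Fin n, X i ^ (n - 1 - (i : ℕ))) ∧
  ∀ (w : Equiv.Perm (Fin n)) (i j : Fin n), (i : ℕ) + 1 = (j : ℕ) → w i < w j →
    (X i - X j) * S w =
      S (w * Equiv.swap i j) - rename (Equiv.swap i j) (S (w * Equiv.swap i j))

/-- `w` contains the pattern `π`: there is a strictly increasing choice of positions on which
`w` is order isomorphic to `π`. -/
def ContainsPattern {n m : ℕ} (w : Equiv.Perm (Fin n)) (π : Fin m → ℕ) : Prop :=
  ∃ f : Fin m ↪o Fin n, ∀ s t : Fin m, π s < π t ↔ w (f s) < w (f t)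

/-- `w` avoids the pattern `π`. -/
def AvoidsPattern {n m : ℕ} (w : Equiv.Perm (Fin n)) (π : Fin m → ℕ) : Prop :=
  ¬ ContainsPattern w π


namespace SchubertAux

/-! ### Part 1: the nilCoxeter computation -/

section Nil
variable {R A : Type*} [CommRing R] [Ring A] [Algebra R A]

/-- `h_i(x) = 1 + x u_i`. -/
def hh (u : ℕ → A) (i : ℕ) (x : R) : A := 1 + x • u i

/-- `B x k l = h_{k+l-1}(x) ⋯ h_k(x)`. -/
def BB (u : ℕ → A) (x : R) : ℕ → ℕ → A
  | _, 0 => 1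
  | k, l + 1 => BB u x (k + 1) l * hh u k x

structure NilRel (u : ℕ → A) : Prop where
  sq : ∀ i, u i * u i = 0
  comm : ∀ i j, i + 2 ≤ j → u i * u j = u j * u i
  braid : ∀ i, u i * u (i + 1) * u i = u (i + 1) * u i * u (i + 1)

theorem BB_left (u : ℕ → A) (x : R) (l : ℕ) : ∀ k, BB u x k (l + 1) = hh u (k + l) x * BB u x k l := by
  induction l with
  | zero => intro k; simp [BB]
  | succ l ih =>
    intro k
    rw [BB, ih (k + 1), BB, mul_assoc]
    congr 2
    omega

theorem u_comm_BB {u : ℕ → A} (hu : NilRel u) (x : R) (i l : ℕ) :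
    ∀ k, i + 2 ≤ k → u i * BB u x k l = BB u x k l * u i := by
  induction l with
  | zero => intro k _; simp [BB]
  | succ l ih =>
    intro k hk
    have h1 : u i * hh u k x = hh u k x * u i := by
      simp only [hh, mul_add, add_mul, mul_one, one_mul, mul_smul_comm, smul_mul_assoc,
        hu.comm i k hk]
    rw [BB, ← mul_assoc, ih (k + 1) (by omega), mul_assoc, h1, mul_assoc]

theorem hh_comm_BB {u : ℕ → A} (hu : NilRel u) (x y : R) (i l : ℕ)
    (k : ℕ) (hk : i + 2 ≤ k) : hh u i y * BB u x k l = BB u x k l * hh u i y := by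
  simp only [hh, mul_add, add_mul, mul_one, one_mul, mul_smul_comm, smul_mul_assoc,
    u_comm_BB hu x i l k hk]

theorem hh_neg {u : ℕ → A} (hu : NilRel u) (i : ℕ) (y : R) : hh u i y * hh u i (-y) = 1 := by
  simp [hh, mul_add, add_mul, hu.sq]

theorem Zexp {u : ℕ → A} (hu : NilRel u) (k : ℕ) (x y : R) :
    hh u (k+1) (-y) * hh u k x * hh u (k+1) y * hh u k y =
      1 + (x + y) • u k + (x * y) • (u k * u (k+1) - u (k+1) * u k) := by
  have s1 := hu.sq k
  have s2 := hu.sq (k+1)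
  have b := hu.braid k
  simp only [hh]
  generalize u k = p at *
  generalize u (k+1) = q at *
  have e1 : q * (p * p) = 0 := by rw [s1, mul_zero]
  have e2 : q * p * q * p = 0 := by
    rw [← b, mul_assoc, s1, mul_zero]
  have h1 : (1 + (-y) • q) * (1 + x • p) * (1 + y • q) =
      1 + x • p + (x*y) • (p * q) - (x * y) • (q * p) - (x * y * y) • (q * p * q) := by
    simp only [mul_add, add_mul, mul_one, one_mul, mul_smul_comm, smul_mul_assoc, s2, smul_zero]
    module
  rw [h1]
  have h2 : (q * p) * p = 0 := by rw [mul_assoc, e1]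
  simp only [mul_add, add_mul, sub_mul, mul_one, one_mul, mul_smul_comm, smul_mul_assoc, s1, e2,
    h2, b, smul_zero]
  module

theorem BB_comm {u : ℕ → A} (hu : NilRel u) (x y : R) (l : ℕ) :
    ∀ k, BB u x k l * BB u y k l = BB u y k l * BB u x k l := by
  induction l with
  | zero => intro k; simp [BB]
  | succ l ih =>
    cases l with
    | zero =>
      intro k
      simp only [BB, one_mul, hh, mul_add, add_mul, mul_one, mul_smul_comm, smul_mul_assoc, hu.sq,
        smul_zero]
      module
    | succ l =>
      intro k
      have key : ∀ x y : R, BB u x k (l+2) * BB u y k (l+2) =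
          BB u x (k+1) (l+1) * BB u y (k+1) (l+1) *
            (1 + (x + y) • u k + (x * y) • (u k * u (k+1) - u (k+1) * u k)) := by
        intro x y
        rw [← Zexp hu]
        have e1 : BB u y (k+1) (l+1) = BB u y (k+2) l * hh u (k+1) y := rfl
        have e2 : ∀ x : R, BB u x k (l+2) = BB u x (k+1) (l+1) * hh u k x := fun _ => rfl
        rw [e2 x, e2 y, e1]
        have c := hh_comm_BB hu y x k l (k+2) le_rfl
        calc BB u x (k+1) (l+1) * hh u k x * (BB u y (k+2) l * hh u (k+1) y * hh u k y)
            = BB u x (k+1) (l+1) * (hh u k x * BB u y (k+2) l) * hh u (k+1) y * hh u k y := by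
              simp only [mul_assoc]
          _ = BB u x (k+1) (l+1) * BB u y (k+2) l * 1 * hh u k x * hh u (k+1) y * hh u k y := by
              rw [c]; simp only [mul_assoc, one_mul]
          _ = _ := by
              rw [← hh_neg hu (k+1) y]; simp only [mul_assoc]
      rw [key x y, key y x, ih (k+1), add_comm x y, mul_comm x y]

theorem BB_diff {u : ℕ → A} (hu : NilRel u) (x y : R) (k l : ℕ) :
    BB u x k (l+1) * BB u y (k+1) l - BB u y k (l+1) * BB u x (k+1) l =
      (x - y) • (BB u x k (l+1) * BB u y (k+1) l * u k) := by
  have e : ∀ y : R, BB u y (k+1) l = BB u y k (l+1) * hh u k (-y) := by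
    intro y
    rw [BB, mul_assoc, hh_neg hu, mul_one]
  have e3 : BB u y (k+1) l * u k = BB u y k (l+1) * u k := by
    rw [e, mul_assoc]
    congr 1
    simp [hh, add_mul, hu.sq]
  rw [mul_assoc _ (BB u y (k+1) l) (u k), e3, e x, e y, ← mul_assoc, ← mul_assoc, ← mul_assoc,
    BB_comm hu y x, ← mul_sub, ← mul_smul_comm]
  congr 1
  simp only [hh]
  module

/-- `PP z m k l = B(z_k) B(z_{k+1}) ⋯` (`l` factors), the `i`-th one having indices `i ≤ · < m`. -/
def PP (u : ℕ → A) (z : ℕ → R) (m : ℕ) : ℕ → ℕ → A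
  | _, 0 => 1
  | k, l + 1 => BB u (z k) k (m - k) * PP u z m (k + 1) l

theorem u_comm_PP {u : ℕ → A} (hu : NilRel u) (z : ℕ → R) (m i l : ℕ) :
    ∀ k, i + 2 ≤ k → u i * PP u z m k l = PP u z m k l * u i := by
  induction l with
  | zero => intro k _; simp [PP]
  | succ l ih =>
    intro k hk
    rw [PP, ← mul_assoc, u_comm_BB hu _ _ _ _ hk, mul_assoc, ih _ (by omega), mul_assoc]

theorem PP_congr (u : ℕ → A) (z z' : ℕ → R) (m l : ℕ) :
    ∀ k, (∀ i, k ≤ i → z i = z' i) → PP u z m k l = PP u z' m k l := by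
  induction l with
  | zero => intro k _; rfl
  | succ l ih =>
    intro k h
    rw [PP, PP, h k le_rfl, ih (k+1) (fun i hi => h i (by omega))]

theorem PP_diff {u : ℕ → A} (hu : NilRel u) (z z' : ℕ → R) (m i : ℕ) (him : i < m)
    (h1 : z' i = z (i+1)) (h2 : z' (i+1) = z i) (h3 : ∀ j, j ≠ i → j ≠ i + 1 → z' j = z j) (d : ℕ) :
    ∀ l k, k + d = i → i + 2 ≤ k + l →
    PP u z m k l - PP u z' m k l = (z i - z (i+1)) • (PP u z m k l * u i) := by
  induction d with
  | zero =>
    intro l k hk hl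
    obtain rfl : k = i := by omega
    obtain ⟨l, rfl⟩ : ∃ l', l = l' + 2 := ⟨l - 2, by omega⟩
    obtain ⟨q, hq⟩ : ∃ q, m = k + q + 1 := ⟨m - k - 1, by omega⟩
    have a1 : m - k = q + 1 := by omega
    have a2 : m - (k+1) = q := by omega
    simp only [PP, a1, a2]
    rw [PP_congr u z' z m l (k+1+1) (fun j hj => h3 j (by omega) (by omega)), h1, h2,
      ← mul_assoc, ← mul_assoc, ← sub_mul, BB_diff hu, smul_mul_assoc,
      mul_assoc _ (u k) _, u_comm_PP hu z m k l (k+1+1) (by omega), ← mul_assoc]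
  | succ d ih =>
    intro l k hk hl
    obtain ⟨l, rfl⟩ : ∃ l', l = l' + 1 := ⟨l - 1, by omega⟩
    simp only [PP]
    rw [h3 k (by omega) (by omega), ← mul_sub, ih l (k+1) (by omega) (by omega), mul_smul_comm,
      mul_assoc]

end Nil

/-! ### Part 2: the operators on functions on the symmetric group -/

section Ops
variable {n : ℕ} {R : Type*} [CommRing R]

open Equiv

/-- left multiplication operator -/
def UU (R : Type*) [CommRing R] (a b : Fin n) : Module.End R (Perm (Fin n) → R) where
  toFun f w := if w.symm b < w.symm a then f (swap a b * w) else 0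
  map_add' f g := by ext w; by_cases h : w.symm b < w.symm a <;> simp [h]
  map_smul' c f := by ext w; by_cases h : w.symm b < w.symm a <;> simp [h]

/-- right multiplication operator -/
def rho (R : Type*) [CommRing R] (a b : Fin n) : Module.End R (Perm (Fin n) → R) where
  toFun f w := if w b < w a then f (w * swap a b) else 0
  map_add' f g := by ext w; by_cases h : w b < w a <;> simp [h]
  map_smul' c f := by ext w; by_cases h : w b < w a <;> simp [h]

theorem UU_apply (a b : Fin n) (f : Perm (Fin n) → R) (w : Perm (Fin n)) :
    UU R a b f w = if w.symm b < w.symm a then f (swap a b * w) else 0 := rfl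

theorem rho_apply (a b : Fin n) (f : Perm (Fin n) → R) (w : Perm (Fin n)) :
    rho R a b f w = if w b < w a then f (w * swap a b) else 0 := rfl

theorem symm_swap_mul (a b c : Fin n) (w : Perm (Fin n)) :
    (swap a b * w).symm c = w.symm (swap a b c) := by
  rw [Equiv.symm_apply_eq]; simp

theorem UU_sq (a b : Fin n) : UU R a b * UU R a b = 0 := by
  refine LinearMap.ext fun f => funext fun w => ?_
  simp only [Module.End.mul_apply, UU_apply, symm_swap_mul, swap_apply_left, swap_apply_right]
  split_ifs with h1 h2
  · exact absurd h1 h2.not_gt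
  all_goals rfl

theorem UU_comm (a b c d : Fin n) (h1 : a ≠ c) (h2 : a ≠ d) (h3 : b ≠ c) (h4 : b ≠ d) :
    UU R a b * UU R c d = UU R c d * UU R a b := by
  refine LinearMap.ext fun f => funext fun w => ?_
  simp only [Module.End.mul_apply, UU_apply, symm_swap_mul,
    swap_apply_of_ne_of_ne h1.symm h3.symm, swap_apply_of_ne_of_ne h2.symm h4.symm,
    swap_apply_of_ne_of_ne h1 h2, swap_apply_of_ne_of_ne h3 h4]
  have : swap c d * (swap a b * w) = swap a b * (swap c d * w) := by
    rw [← mul_assoc, ← mul_assoc]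
    congr 1
    ext x
    simp only [Perm.mul_apply, swap_apply_def]
    split_ifs <;> simp_all
  rw [this]
  split_ifs <;> rfl

theorem UU_braid (a b c : Fin n) (h1 : a ≠ b) (h2 : a ≠ c) (h3 : b ≠ c) :
    UU R a b * UU R b c * UU R a b = UU R b c * UU R a b * UU R b c := by
  refine LinearMap.ext fun f => funext fun w => ?_
  have e1 : swap a b c = c := swap_apply_of_ne_of_ne h2.symm h3.symm
  have e2 : swap b c a = a := swap_apply_of_ne_of_ne h1 h2
  have : swap a b * (swap b c * (swap a b * w)) = swap b c * (swap a b * (swap b c * w)) := by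
    rw [← mul_assoc, ← mul_assoc, ← mul_assoc, ← mul_assoc]
    congr 1
    ext x
    simp only [Perm.mul_apply, swap_apply_def]
    split_ifs <;> simp_all
  simp only [Module.End.mul_apply, UU_apply, symm_swap_mul, swap_apply_left, swap_apply_right,
    e1, e2, this]
  split_ifs <;> rfl

theorem swap_lt (a b x y : Fin n) (hab : (a : ℕ) + 1 = b) (h : ¬ (x = a ∧ y = b))
    (h' : ¬ (x = b ∧ y = a)) : swap a b x < swap a b y ↔ x < y := by
  simp only [swap_apply_def]
  split_ifs <;> simp only [Fin.lt_def, Fin.ext_iff] at * <;> omega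

theorem UU_rho (a b c d : Fin n) (hab : (a : ℕ) + 1 = b) (hcd : (c : ℕ) + 1 = d)
    (f : Perm (Fin n) → R) :
    UU R c d (rho R a b f) = rho R a b (UU R c d f) := by
  funext w
  simp only [UU_apply, rho_apply, mul_assoc]
  have e : ∀ x, (w * swap a b).symm x = swap a b (w.symm x) := by
    intro x; rw [Equiv.symm_apply_eq]; simp
  simp only [e, Perm.mul_apply]
  by_cases hA : w a = c ∧ w b = d
  · obtain ⟨rfl, rfl⟩ := hA
    have : a < b := by rw [Fin.lt_def]; omega
    have : w a < w b := by rw [Fin.lt_def]; omega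
    simp [this.not_gt, ‹a < b›.not_gt]
  · by_cases hB : w a = d ∧ w b = c
    · obtain ⟨rfl, rfl⟩ := hB
      have : a < b := by rw [Fin.lt_def]; omega
      have : w b < w a := by rw [Fin.lt_def]; omega
      simp [this.not_gt, ‹a < b›.not_gt]
    · have i1 := swap_lt c d (w b) (w a) hcd (by tauto) (by tauto)
      have i2 := swap_lt a b (w.symm d) (w.symm c) hab
        (by simp only [Equiv.symm_apply_eq]; intro h; exact hB ⟨h.1.symm, h.2.symm⟩)
        (by simp only [Equiv.symm_apply_eq]; intro h; exact hA ⟨h.2.symm, h.1.symm⟩)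
      simp only [i1, i2]
      split_ifs <;> rfl

theorem UU_delta (a b : Fin n) (hab : (a : ℕ) + 1 = b) :
    UU R a b (Pi.single 1 1) = rho R a b (Pi.single 1 1) := by
  have hlt : a < b := by rw [Fin.lt_def]; omega
  funext w
  simp only [UU_apply, rho_apply, Pi.single_apply]
  have e1 : swap a b * w = 1 ↔ w = swap a b := by
    constructor
    · intro h; have := eq_inv_of_mul_eq_one_right h; simpa using this
    · rintro rfl; simp
  have e2 : w * swap a b = 1 ↔ w = swap a b := by
    constructor
    · intro h; have := eq_inv_of_mul_eq_one_left h; simpa using this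
    · rintro rfl; simp
  simp only [e1, e2]
  by_cases h : w = swap a b
  · subst h; simp [hlt]
  · simp [h]

/-- the generators indexed by natural numbers -/
def uu (n : ℕ) (R : Type*) [CommRing R] (i : ℕ) : Module.End R (Perm (Fin n) → R) :=
  if h : i + 1 < n then UU R ⟨i, by omega⟩ ⟨i + 1, h⟩ else 0

theorem uu_rel : NilRel (uu n R) where
  sq i := by
    unfold uu; split_ifs
    · exact UU_sq _ _
    · simp
  comm i j hij := by
    unfold uu; split_ifs
    · apply UU_comm <;> simp [Fin.ext_iff] <;> omega
    all_goals simp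
  braid i := by
    unfold uu; split_ifs
    · apply UU_braid <;> simp only [ne_eq, Fin.ext_iff] <;> omega
    all_goals simp

theorem uu_rho (a b : Fin n) (hab : (a : ℕ) + 1 = b) (i : ℕ) (f : Perm (Fin n) → R) :
    uu n R i (rho R a b f) = rho R a b (uu n R i f) := by
  unfold uu; split_ifs
  · exact UU_rho _ _ _ _ hab rfl f
  · simp

theorem hh_rho (a b : Fin n) (hab : (a : ℕ) + 1 = b) (i : ℕ) (x : R) (f : Perm (Fin n) → R) :
    hh (uu n R) i x (rho R a b f) = rho R a b (hh (uu n R) i x f) := by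
  simp [hh, uu_rho a b hab]

theorem BB_rho (a b : Fin n) (hab : (a : ℕ) + 1 = b) (x : R) (l : ℕ) :
    ∀ k (f : Perm (Fin n) → R),
    BB (uu n R) x k l (rho R a b f) = rho R a b (BB (uu n R) x k l f) := by
  induction l with
  | zero => intro k f; simp [BB]
  | succ l ih => intro k f; simp only [BB, Module.End.mul_apply, hh_rho a b hab, ih]

theorem PP_rho (a b : Fin n) (hab : (a : ℕ) + 1 = b) (z : ℕ → R) (m l : ℕ) :
    ∀ k (f : Perm (Fin n) → R),
    PP (uu n R) z m k l (rho R a b f) = rho R a b (PP (uu n R) z m k l f) := by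
  induction l with
  | zero => intro k f; simp [PP]
  | succ l ih => intro k f; simp only [PP, Module.End.mul_apply, BB_rho a b hab, ih]

/-- partial Schubert polynomials -/
def TT (n : ℕ) {R : Type*} [CommRing R] (z : ℕ → R) (k l : ℕ) : Perm (Fin n) → R :=
  PP (uu n R) z (n - 1) k l (Pi.single 1 1)

theorem uu_map {R' : Type*} [CommRing R'] (φ : R →+* R') (i : ℕ) (f : Perm (Fin n) → R)
    (w : Perm (Fin n)) : φ (uu n R i f w) = uu n R' i (fun v => φ (f v)) w := by
  unfold uu; split_ifs
  · simp only [UU_apply]; split_ifs <;> simp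
  · simp

theorem hh_map {R' : Type*} [CommRing R'] (φ : R →+* R') (i : ℕ) (x : R) (f : Perm (Fin n) → R)
    (w : Perm (Fin n)) : φ (hh (uu n R) i x f w) = hh (uu n R') i (φ x) (fun v => φ (f v)) w := by
  simp [hh, uu_map]

theorem BB_map {R' : Type*} [CommRing R'] (φ : R →+* R') (x : R) (l : ℕ) :
    ∀ k (f : Perm (Fin n) → R) (w : Perm (Fin n)),
      φ (BB (uu n R) x k l f w) = BB (uu n R') (φ x) k l (fun v => φ (f v)) w := by
  induction l with
  | zero => intro k f w; simp [BB]
  | succ l ih => intro k f w; simp only [BB, Module.End.mul_apply, ih, hh_map]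

theorem PP_map {R' : Type*} [CommRing R'] (φ : R →+* R') (z : ℕ → R) (m l : ℕ) :
    ∀ k (f : Perm (Fin n) → R) (w : Perm (Fin n)),
      φ (PP (uu n R) z m k l f w) = PP (uu n R') (fun i => φ (z i)) m k l (fun v => φ (f v)) w := by
  induction l with
  | zero => intro k f w; simp [PP]
  | succ l ih => intro k f w; simp only [PP, Module.End.mul_apply, ih, BB_map]

theorem TT_map {R' : Type*} [CommRing R'] (φ : R →+* R') (z : ℕ → R) (k l : ℕ)
    (w : Perm (Fin n)) : φ (TT n z k l w) = TT n (fun i => φ (z i)) k l w := by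
  unfold TT
  rw [PP_map]
  have : (fun v : Perm (Fin n) => φ ((Pi.single 1 1 : Perm (Fin n) → R) v)) = Pi.single 1 1 := by
    funext v
    simp only [Pi.single_apply]; split_ifs <;> simp
  rw [this]

theorem TT_diff (z z' : ℕ → R) (a b : Fin n) (hab : (a : ℕ) + 1 = b)
    (h1 : z' a = z b) (h2 : z' b = z a)
    (h3 : ∀ j : ℕ, j ≠ a → j ≠ b → z' j = z j) (w : Perm (Fin n)) (hw : w a < w b) :
    (z a - z b) * TT n z 0 n w = TT n z 0 n (w * swap a b) - TT n z' 0 n (w * swap a b) := by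
  have hb := b.2
  have key := PP_diff (uu_rel (n := n) (R := R)) z z' (n-1) a (by omega) (by rw [hab]; exact h1)
    (by rw [hab]; exact h2) (fun j hj hj' => h3 j hj (by omega)) a n 0 (by omega) (by omega)
  have k2 := congrFun (LinearMap.congr_fun key (Pi.single 1 1)) (w * swap a b)
  have e : uu n R (a : ℕ) (Pi.single 1 1) = rho R a b (Pi.single 1 1) := by
    unfold uu
    rw [dif_pos (by omega)]
    have : (⟨(a:ℕ)+1, by omega⟩ : Fin n) = b := Fin.ext hab
    simp only [this]
    exact UU_delta a b hab
  simp only [LinearMap.sub_apply, LinearMap.smul_apply, Module.End.mul_apply, e,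
    PP_rho a b hab, Pi.sub_apply, Pi.smul_apply, rho_apply] at k2
  rw [hab] at k2
  simp [hw, mul_assoc] at k2
  exact k2.symm

end Ops

/-! ### Part 3: the Gale order through counting functions -/

section Gale
variable {n : ℕ}

/-- number of elements below the threshold `t` -/
def cnt (C : Finset (Fin n)) (t : ℕ) : ℕ := (C.filter fun i : Fin n => (i : ℕ) < t).card

/-- counting form of the Gale order -/
def GLE (C D : Finset (Fin n)) : Prop := C.card = D.card ∧ ∀ t, cnt D t ≤ cnt C t

theorem orderIso_lt_iff (C : Finset (Fin n)) (k : ℕ) (h : k < C.card) (t : ℕ) :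
    ((C.orderIsoOfFin rfl ⟨k, h⟩ : Fin n) : ℕ) < t ↔ k < cnt C t := by
  classical
  let e := C.orderIsoOfFin rfl
  have hc : cnt C t = (Finset.univ.filter fun j : Fin C.card => ((e j : Fin n) : ℕ) < t).card := by
    unfold cnt
    symm
    apply Finset.card_bij (fun j _ => (e j : Fin n))
    · intro j hj
      simp only [Finset.mem_filter, Finset.mem_univ, true_and] at hj ⊢
      exact ⟨(e j).2, hj⟩
    · intro a _ b _ hab
      exact e.injective (Subtype.ext hab)
    · intro b hb
      simp only [Finset.mem_filter] at hb
      refine ⟨e.symm ⟨b, hb.1⟩, ?_, ?_⟩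
      · simp [hb.2]
      · simp
  have hmono : ∀ i j : Fin C.card, i ≤ j → ((e i : Fin n) : ℕ) ≤ ((e j : Fin n) : ℕ) := by
    intro i j hij
    exact e.monotone hij
  rw [hc]
  constructor
  · intro hk
    have : (Finset.univ.filter fun j : Fin C.card => (j : ℕ) < k + 1) ⊆
        (Finset.univ.filter fun j : Fin C.card => ((e j : Fin n) : ℕ) < t) := by
      intro j hj
      simp only [Finset.mem_filter, Finset.mem_univ, true_and] at hj ⊢
      exact (hmono j ⟨k, h⟩ (by rw [Fin.le_def]; simp only; omega)).trans_lt hk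
    have h2 := Finset.card_le_card this
    rw [Fin.card_filter_val_lt] at h2
    omega
  · intro hk
    by_contra hcon
    have : (Finset.univ.filter fun j : Fin C.card => ((e j : Fin n) : ℕ) < t) ⊆
      (Finset.univ.filter fun j : Fin C.card => (j : ℕ) < k) := by
      intro j hj
      simp only [Finset.mem_filter, Finset.mem_univ, true_and] at hj ⊢
      by_contra hjk
      exact hcon ((hmono ⟨k, h⟩ j (by rw [Fin.le_def]; simp only; omega)).trans_lt hj)
    have h2 := Finset.card_le_card this
    rw [Fin.card_filter_val_lt] at h2
    omega

theorem cnt_le_card (C : Finset (Fin n)) (t : ℕ) : cnt C t ≤ C.card := Finset.card_filter_le _ _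

theorem galeLE_iff (C D : Finset (Fin n)) : GaleLE C D ↔ GLE C D := by
  constructor
  · rintro ⟨h1, h2⟩
    refine ⟨h1, fun t => ?_⟩
    by_contra hcon
    push Not at hcon
    have hD : cnt C t < D.card := hcon.trans_le (cnt_le_card D t)
    have hC : cnt C t < C.card := h1 ▸ hD
    have a := (orderIso_lt_iff D _ hD t).2 hcon
    have b := h2 _ hC hD
    exact absurd ((orderIso_lt_iff C _ hC t).1 (lt_of_le_of_lt b a)) (lt_irrefl _)
  · rintro ⟨h1, h2⟩
    refine ⟨h1, fun k hC hD => ?_⟩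
    have a := (orderIso_lt_iff D _ hD _).1 (Nat.lt_succ_self _)
    have b := (orderIso_lt_iff C _ hC _).2 (a.trans_le (h2 _))
    rw [Fin.le_def]
    omega

theorem GLE.empty {C : Finset (Fin n)} (h : GLE C ∅) : C = ∅ := by
  simpa using h.1

theorem cnt_zero (C : Finset (Fin n)) : cnt C 0 = 0 := by simp [cnt]

theorem cnt_mono (C : Finset (Fin n)) {s t : ℕ} (h : s ≤ t) : cnt C s ≤ cnt C t := by
  apply Finset.card_le_card
  intro i; simp only [Finset.mem_filter]; rintro ⟨h1, h2⟩; exact ⟨h1, by omega⟩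

theorem cnt_succ_le (C : Finset (Fin n)) (t : ℕ) : cnt C (t + 1) ≤ cnt C t + 1 := by
  by_cases ht : t < n
  · have : (C.filter fun i : Fin n => (i : ℕ) < t + 1) ⊆ insert ⟨t, ht⟩ (C.filter fun i : Fin n => (i : ℕ) < t) := by
      intro i
      simp only [Finset.mem_filter, Finset.mem_insert, Fin.ext_iff]
      rintro ⟨h1, h2⟩
      by_cases h : (i : ℕ) = t
      · exact Or.inl h
      · exact Or.inr ⟨h1, by omega⟩
    exact (Finset.card_le_card this).trans (Finset.card_insert_le _ _)
  · have : cnt C (t+1) = cnt C t := by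
      unfold cnt; congr 1; ext i; have := i.2
      simp only [Finset.mem_filter, and_congr_right_iff]
      intro _; omega
    omega

theorem cnt_card (C : Finset (Fin n)) (t : ℕ) (ht : n ≤ t) : cnt C t = C.card := by
  unfold cnt; rw [Finset.filter_true_of_mem]
  intro i _; have := i.2; omega

theorem cnt_insert (C : Finset (Fin n)) (k : Fin n) (hk : k ∉ C) (t : ℕ) :
    cnt (insert k C) t = cnt C t + if (k : ℕ) < t then 1 else 0 := by
  unfold cnt
  rw [Finset.filter_insert]
  split_ifs
  · rw [Finset.card_insert_of_notMem]
    simp [hk]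
  · rfl

theorem cnt_eq_zero (C : Finset (Fin n)) (k : ℕ) (h : ∀ i ∈ C, k ≤ (i : ℕ)) (t : ℕ) (ht : t ≤ k) :
    cnt C t = 0 := by
  unfold cnt
  rw [Finset.card_eq_zero, Finset.filter_eq_empty_iff]
  intro i hi; have := h i hi; omega

/-- replace the part of `X` below `t` by that of `Y` -/
def hd (X Y : Finset (Fin n)) (t : ℕ) : Finset (Fin n) :=
  (Y.filter fun i : Fin n => (i : ℕ) < t) ∪ (X.filter fun i : Fin n => t ≤ (i : ℕ))

theorem mem_hd (X Y : Finset (Fin n)) (t : ℕ) (i : Fin n) :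
    i ∈ hd X Y t ↔ if (i : ℕ) < t then i ∈ Y else i ∈ X := by
  unfold hd
  simp only [Finset.mem_union, Finset.mem_filter]
  split_ifs with h
  · constructor
    · rintro (h1 | h1)
      · exact h1.1
      · omega
    · intro h1; exact Or.inl ⟨h1, h⟩
  · constructor
    · rintro (h1 | h1)
      · omega
      · exact h1.1
    · intro h1; exact Or.inr ⟨h1, by omega⟩

theorem cnt_hd (X Y : Finset (Fin n)) (t : ℕ) (h : cnt X t = cnt Y t) (r : ℕ) :
    cnt (hd X Y t) r = if r ≤ t then cnt Y r else cnt X r := by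
  split_ifs with hr
  · unfold cnt
    congr 1
    ext i
    simp only [Finset.mem_filter, mem_hd]
    constructor
    · rintro ⟨h1, h2⟩; rw [if_pos (by omega)] at h1; exact ⟨h1, h2⟩
    · rintro ⟨h1, h2⟩; rw [if_pos (by omega)]; exact ⟨h1, h2⟩
  · have e1 : cnt (hd X Y t) r = cnt Y t + (X.filter fun i : Fin n => t ≤ (i : ℕ) ∧ (i : ℕ) < r).card := by
      unfold cnt
      rw [← Finset.card_union_of_disjoint]
      · congr 1
        ext i
        simp only [Finset.mem_filter, mem_hd, Finset.mem_union]
        split_ifs with h1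
        · constructor
          · rintro ⟨a, b⟩; exact Or.inl ⟨a, h1⟩
          · rintro (a | a)
            · exact ⟨a.1, by omega⟩
            · omega
        · constructor
          · rintro ⟨a, b⟩; exact Or.inr ⟨a, by omega, b⟩
          · rintro (a | a)
            · omega
            · exact ⟨a.1, a.2.2⟩
      · rw [Finset.disjoint_left]
        intro i; simp only [Finset.mem_filter]; omega
    have e2 : cnt X r = cnt X t + (X.filter fun i : Fin n => t ≤ (i : ℕ) ∧ (i : ℕ) < r).card := by
      unfold cnt
      rw [← Finset.card_union_of_disjoint]
      · congr 1
        ext i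
        simp only [Finset.mem_filter, Finset.mem_union]
        constructor
        · rintro ⟨a, b⟩
          by_cases h1 : (i : ℕ) < t
          · exact Or.inl ⟨a, h1⟩
          · exact Or.inr ⟨a, by omega, b⟩
        · rintro (a | a)
          · exact ⟨a.1, by omega⟩
          · exact ⟨a.1, a.2.2⟩
      · rw [Finset.disjoint_left]
        intro i; simp only [Finset.mem_filter]; omega
    rw [e1, e2, h]

theorem exchange (X Y DX DY : Finset (Fin n)) (k : Fin n) (s : ℕ) (hX : GLE X DX) (hY : GLE Y DY)
    (kX : k ∈ X) (kY : k ∉ Y) (rY : ∀ i ∈ Y, (k : ℕ) ≤ (i : ℕ))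
    (hs : (k : ℕ) < s) (hc : cnt X s ≤ cnt Y s) (hD : ∀ r ≤ s, cnt DX r ≤ cnt DY r) :
    ∃ t, (k : ℕ) < t ∧ GLE (hd X Y t) DX ∧ GLE (hd Y X t) DY := by
  classical
  have hex : ∃ t, (k : ℕ) < t ∧ cnt X t ≤ cnt Y t := ⟨s, hs, hc⟩
  obtain ⟨t, ht, hmin⟩ : ∃ t, ((k : ℕ) < t ∧ cnt X t ≤ cnt Y t) ∧
      ∀ r < t, ¬ ((k : ℕ) < r ∧ cnt X r ≤ cnt Y r) :=
    ⟨Nat.find hex, Nat.find_spec hex, fun r hr => Nat.find_min hex hr⟩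
  have hts : t ≤ s := by
    by_contra h
    exact hmin s (by omega) ⟨hs, hc⟩
  have hge : ∀ r < t, cnt Y r ≤ cnt X r := by
    intro r hr
    by_cases hkr : (k : ℕ) < r
    · have := hmin r hr; push Not at this; exact (this hkr).le
    · rw [cnt_eq_zero Y k rY r (by omega)]; omega
  have hX1 : 1 ≤ cnt X ((k : ℕ) + 1) := by
    unfold cnt
    rw [Nat.one_le_iff_ne_zero, ← Nat.pos_iff_ne_zero, Finset.card_pos]
    exact ⟨k, by simp [kX]⟩
  have hY1 : cnt Y ((k : ℕ) + 1) = 0 := by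
    unfold cnt
    rw [Finset.card_eq_zero, Finset.filter_eq_empty_iff]
    intro i hi hlt
    have := rY i hi
    have : i = k := Fin.ext (by omega)
    exact kY (this ▸ hi)
  have heq : cnt X t = cnt Y t := by
    apply le_antisymm ht.2
    have hne : t ≠ (k : ℕ) + 1 := by
      rintro rfl; have := ht.2; omega
    obtain ⟨q, rfl⟩ : ∃ q, t = q + 1 := ⟨t - 1, by omega⟩
    have h1 := hmin q (by omega)
    push Not at h1
    have h2 := h1 (by omega)
    have h3 := cnt_succ_le Y q
    have h4 := cnt_mono X (Nat.le_succ q)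
    simp only [Nat.succ_eq_add_one] at h4
    omega
  have card1 : (hd X Y t).card = X.card := by
    rw [← cnt_card _ (max n (t+1)) (le_max_left _ _), cnt_hd X Y t heq, if_neg (by omega),
      cnt_card _ _ (le_max_left _ _)]
  have card2 : (hd Y X t).card = Y.card := by
    rw [← cnt_card _ (max n (t+1)) (le_max_left _ _), cnt_hd Y X t heq.symm, if_neg (by omega),
      cnt_card _ _ (le_max_left _ _)]
  refine ⟨t, ht.1, ⟨card1.trans hX.1, fun r => ?_⟩, ⟨card2.trans hY.1, fun r => ?_⟩⟩
  · rw [cnt_hd X Y t heq]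
    split_ifs with h
    · exact (hD r (by omega)).trans (hY.2 r)
    · exact hX.2 r
  · rw [cnt_hd Y X t heq.symm]
    split_ifs with h
    · rcases h.lt_or_eq with h | h
      · exact (hY.2 r).trans (hge r h)
      · subst h; rw [heq]; exact hY.2 r
    · exact hY.2 r

end Gale

/-! ### Part 4: weights and Rothe diagrams -/

section Diag
variable {n : ℕ}
open Equiv

/-- weight of a diagram -/
noncomputable def wt (C : Fin n → Finset (Fin n)) : Fin n →₀ ℕ :=
  Finsupp.equivFunOnFinite.symm fun i => ∑ c, if i ∈ C c then 1 else 0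

theorem wt_apply (C : Fin n → Finset (Fin n)) (i : Fin n) :
    wt C i = ∑ c, if i ∈ C c then 1 else 0 := rfl

theorem xDiagram_eq (C : Fin n → Finset (Fin n)) : xDiagram C = monomial (wt C) 1 := by
  rw [monomial_eq, Finsupp.prod_fintype _ _ (fun i => pow_zero _)]
  simp only [wt_apply, map_one, one_mul, xDiagram, ← Finset.prod_pow_eq_pow_sum]
  rw [Finset.prod_comm]
  refine Finset.prod_congr rfl fun j _ => ?_
  simp [pow_ite, Finset.prod_ite_mem]

theorem xDiagram_iff (C : Fin n → Finset (Fin n)) (β : Fin n →₀ ℕ) :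
    xDiagram C = monomial β 1 ↔ wt C = β := by
  rw [xDiagram_eq]
  constructor
  · intro h; exact (monomial_left_injective (one_ne_zero)) h
  · rintro rfl; rfl

theorem wt_split (C : Fin n → Finset (Fin n)) (a b : Fin n) (hab : a ≠ b) (i : Fin n) :
    wt C i = (if i ∈ C a then 1 else 0) + (if i ∈ C b then 1 else 0) +
      ∑ c ∈ (Finset.univ.erase a).erase b, if i ∈ C c then 1 else 0 := by
  rw [wt_apply, ← Finset.add_sum_erase _ _ (Finset.mem_univ a),
    ← Finset.add_sum_erase (Finset.univ.erase a) _ (a := b) (by simp [hab.symm]), add_assoc]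

/-- replace columns `a` and `b` -/
def upd (C : Fin n → Finset (Fin n)) (a b : Fin n) (P Q : Finset (Fin n)) : Fin n → Finset (Fin n) :=
  fun c => if c = a then P else if c = b then Q else C c

theorem upd_a (C : Fin n → Finset (Fin n)) (a b : Fin n) (P Q : Finset (Fin n)) :
    upd C a b P Q a = P := by simp [upd]

theorem upd_b (C : Fin n → Finset (Fin n)) (a b : Fin n) (hab : a ≠ b) (P Q : Finset (Fin n)) :
    upd C a b P Q b = Q := by simp [upd, hab.symm]

theorem upd_c (C : Fin n → Finset (Fin n)) (a b c : Fin n) (ha : c ≠ a) (hb : c ≠ b)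
    (P Q : Finset (Fin n)) : upd C a b P Q c = C c := by simp [upd, ha, hb]

theorem wt_upd (C : Fin n → Finset (Fin n)) (a b : Fin n) (hab : a ≠ b) (P Q : Finset (Fin n))
    (i : Fin n) : wt (upd C a b P Q) i + (if i ∈ C a then 1 else 0) + (if i ∈ C b then 1 else 0)
      = wt C i + (if i ∈ P then 1 else 0) + (if i ∈ Q then 1 else 0) := by
  rw [wt_split C a b hab, wt_split (upd C a b P Q) a b hab, upd_a, upd_b _ _ _ hab]
  have : ∑ c ∈ (Finset.univ.erase a).erase b, (if i ∈ upd C a b P Q c then 1 else 0) =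
      ∑ c ∈ (Finset.univ.erase a).erase b, if i ∈ C c then 1 else 0 := by
    refine Finset.sum_congr rfl fun c hc => ?_
    simp only [Finset.mem_erase, Finset.mem_univ, and_true] at hc
    rw [upd_c _ _ _ _ hc.2 hc.1]
  rw [this]; ring

theorem mem_rothe (w : Perm (Fin n)) (j i : Fin n) : i ∈ rothe w j ↔ j < w i ∧ i < w.symm j := by
  simp [rothe]

section
variable (w : Perm (Fin n)) (a b : Fin n)

theorem rothe_swap_b (hab : (a : ℕ) + 1 = b) : rothe (swap a b * w) b = (rothe w a).erase (w.symm b) := by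
  ext i
  rw [Finset.mem_erase, mem_rothe, mem_rothe, symm_swap_mul, swap_apply_right, Perm.mul_apply]
  have h1 : i ≠ w.symm b ↔ w i ≠ b := by rw [ne_eq, ne_eq, Equiv.eq_symm_apply]
  rw [h1, swap_apply_def]
  split_ifs <;> simp only [Fin.lt_def, Fin.ext_iff, ne_eq] at * <;> omega

theorem rothe_swap_a (hab : (a : ℕ) + 1 = b) (hinv : w.symm b < w.symm a) : rothe (swap a b * w) a = rothe w b := by
  ext i
  rw [mem_rothe, mem_rothe, symm_swap_mul, swap_apply_left, Perm.mul_apply]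
  have h1 : i = w.symm b ↔ w i = b := by rw [Equiv.eq_symm_apply]
  have h2 : i = w.symm a ↔ w i = a := by rw [Equiv.eq_symm_apply]
  rw [swap_apply_def]
  split_ifs <;> simp only [Fin.lt_def, Fin.ext_iff, ne_eq] at * <;> omega

theorem rothe_swap_c (hab : (a : ℕ) + 1 = b) (c : Fin n) (ha : c ≠ a) (hb : c ≠ b) :
    rothe (swap a b * w) c = rothe w c := by
  ext i
  rw [mem_rothe, mem_rothe, symm_swap_mul, swap_apply_of_ne_of_ne ha hb, Perm.mul_apply]
  rw [swap_apply_def]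
  split_ifs <;> simp only [Fin.lt_def, Fin.ext_iff, ne_eq] at * <;> omega

theorem rothe_mem_inv (hab : (a : ℕ) + 1 = b) (hinv : w.symm b < w.symm a) : w.symm b ∈ rothe w a := by
  rw [mem_rothe]
  refine ⟨?_, hinv⟩
  simp only [Equiv.apply_symm_apply, Fin.lt_def]; omega

theorem cnt_rothe_inv (hab : (a : ℕ) + 1 = b) (r : ℕ) (hr : r ≤ (w.symm b : ℕ)) :
    cnt (rothe w a) r ≤ cnt (rothe w b) r := by
  apply Finset.card_le_card
  intro i
  simp only [Finset.mem_filter, mem_rothe]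
  have h1 : i = w.symm b ↔ w i = b := by rw [Equiv.eq_symm_apply]
  simp only [Fin.lt_def, Fin.ext_iff] at *
  omega

theorem rothe_sub (hab : (a : ℕ) + 1 = b) (hinv : w.symm a < w.symm b) : rothe w a ⊆ rothe w b := by
  intro i
  simp only [mem_rothe]
  have h1 : i = w.symm b ↔ w i = b := by rw [Equiv.eq_symm_apply]
  simp only [Fin.lt_def, Fin.ext_iff] at *
  omega

end

theorem cnt_sub {C D : Finset (Fin n)} (h : C ⊆ D) (t : ℕ) : cnt C t ≤ cnt D t :=
  Finset.card_le_card (Finset.filter_subset_filter _ h)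

end Diag

/-! ### Part 5: coefficient bounds -/

section Bounds
variable {n : ℕ}
open Equiv

/-- Diagrams `C ≤ D(w)` with all rows at least `k`, with `k` only in columns `< j`. -/
def Adm (k j : ℕ) (w : Perm (Fin n)) (C : Fin n → Finset (Fin n)) : Prop :=
  (∀ c, GLE (C c) (rothe w c)) ∧ (∀ c, ∀ i ∈ C c, k ≤ (i : ℕ)) ∧
    (∀ c, ∀ i ∈ C c, (i : ℕ) = k → (c : ℕ) < j)

open scoped Classical in
noncomputable def AdmSet (k j : ℕ) (w : Perm (Fin n)) (β : Fin n →₀ ℕ) :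
    Finset (Fin n → Finset (Fin n)) := Finset.univ.filter fun C => Adm k j w C ∧ wt C = β

theorem mem_AdmSet (k j : ℕ) (w : Perm (Fin n)) (β : Fin n →₀ ℕ) (C : Fin n → Finset (Fin n)) :
    C ∈ AdmSet k j w β ↔ Adm k j w C ∧ wt C = β := by
  simp [AdmSet]

def Fixes (k : ℕ) (w : Perm (Fin n)) : Prop := ∀ i : Fin n, (i : ℕ) < k → w i = i

abbrev Fam (n : ℕ) := Perm (Fin n) → MvPolynomial (Fin n) ℤ

def NN (f : Fam n) : Prop := ∀ w β, 0 ≤ coeff β (f w)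
def Supp (f : Fam n) (k : ℕ) : Prop := ∀ w, ¬ Fixes k w → f w = 0
def UB (f : Fam n) (k j : ℕ) : Prop := ∀ w β, coeff β (f w) ≤ ((AdmSet k j w β).card : ℤ)
def LB (f : Fam n) (k j : ℕ) : Prop := ∀ w, Fixes k w → ∀ β, (∃ C, Adm k j w C ∧ wt C = β) →
  (∀ C, Adm k (j+1) w C → wt C = β → Adm k j w C) → 1 ≤ coeff β (f w)
def LB0 (f : Fam n) (k : ℕ) : Prop := ∀ w, Fixes k w → ∀ β,
  (∃ C : Fin n → Finset (Fin n), (∀ c, GLE (C c) (rothe w c)) ∧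
    (∀ c, ∀ i ∈ C c, k ≤ (i : ℕ)) ∧ wt C = β) →
    1 ≤ coeff β (f w)

theorem Adm.mono {k j j' : ℕ} (h : j ≤ j') {w : Perm (Fin n)} {C : Fin n → Finset (Fin n)}
    (hC : Adm k j w C) : Adm k j' w C :=
  ⟨hC.1, hC.2.1, fun c i hi hk => (hC.2.2 c i hi hk).trans_le h⟩

section Step
variable (f : Fam n) (k a b : Fin n)

/-- the elementary operator -/
noncomputable def stp : Fam n := fun w => f w + X k * UU (MvPolynomial (Fin n) ℤ) a b f w

theorem coeff_stp (w : Perm (Fin n)) (β : Fin n →₀ ℕ) : coeff β (stp f k a b w) =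
    coeff β (f w) + if w.symm b < w.symm a then
      (if k ∈ β.support then coeff (β - Finsupp.single k 1) (f (swap a b * w)) else 0) else 0 := by
  simp only [stp, coeff_add, UU_apply]
  congr 1
  split_ifs with h1 h2
  · rw [coeff_X_mul', if_pos h2]
  · rw [coeff_X_mul', if_neg h2]
  · simp

theorem NN_stp (h : NN f) : NN (stp f k a b) := by
  intro w β
  rw [coeff_stp]
  have h1 := h w β
  have h2 := h (swap a b * w) (β - Finsupp.single k 1)
  split_ifs <;> omega

theorem fixes_swap (m : ℕ) (hm : m ≤ a) (hb : m ≤ b) (w : Perm (Fin n)) :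
    Fixes m (swap a b * w) ↔ Fixes m w := by
  have key : ∀ w : Perm (Fin n), Fixes m w → Fixes m (swap a b * w) := by
    intro w h i hi
    rw [Perm.mul_apply, h i hi, swap_apply_of_ne_of_ne]
    · intro h; subst h; omega
    · intro h; subst h; omega
  constructor
  · intro h
    have := key _ h
    rwa [← mul_assoc, swap_mul_self, one_mul] at this
  · exact key w

theorem Supp_stp (m : ℕ) (hm : m ≤ a) (hb : m ≤ b) (h : Supp f m) : Supp (stp f k a b) m := by
  intro w hw
  have h2 := h (swap a b * w) (by rwa [fixes_swap a b m hm hb])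
  simp [stp, h w hw, UU_apply, h2]

theorem fixes_symm {m : ℕ} {w : Perm (Fin n)} (h : Fixes m w) (i : Fin n) (hi : m ≤ (i : ℕ)) :
    m ≤ (w.symm i : ℕ) := by
  by_contra hcon
  have := h (w.symm i) (by omega)
  rw [Equiv.apply_symm_apply] at this
  rw [← this] at hcon
  omega


/-- from a diagram for `s_a w` to a diagram for `w` -/
theorem adm_back (hab : (a : ℕ) + 1 = b) (w : Perm (Fin n)) (hw : Fixes k w) (hka : k ≤ a) (hinv : w.symm b < w.symm a)
    (C : Fin n → Finset (Fin n)) (hC : ∀ c, GLE (C c) (rothe (swap a b * w) c))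
    (hk : k ∉ C b) (c : Fin n) :
    GLE (upd C a b (insert k (C b)) (C a) c) (rothe w c) := by
  have hne : a ≠ b := by intro h; rw [h] at hab; omega
  by_cases hca : c = a
  · subst hca
    rw [upd_a]
    have h1 := hC b
    rw [rothe_swap_b w c b hab] at h1
    have hm := rothe_mem_inv w c b hab hinv
    refine ⟨?_, fun t => ?_⟩
    · rw [Finset.card_insert_of_notMem hk, h1.1, Finset.card_erase_add_one hm]
    · have h2 := h1.2 t
      have h3 := cnt_insert ((rothe w c).erase (w.symm b)) (w.symm b) (by simp) t
      rw [Finset.insert_erase hm] at h3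
      rw [cnt_insert _ _ hk, h3]
      have h4 := fixes_symm hw b (by rw [Fin.le_def] at hka; omega)
      split_ifs <;> omega
  · by_cases hcb : c = b
    · subst hcb
      rw [upd_b _ _ _ hne, ← rothe_swap_a w a c hab hinv]
      exact hC a
    · rw [upd_c _ _ _ _ hca hcb, ← rothe_swap_c w a b hab c hca hcb]
      exact hC c

theorem wt_back (hab : (a : ℕ) + 1 = b) (C : Fin n → Finset (Fin n)) (hk : k ∉ C b) :
    wt (upd C a b (insert k (C b)) (C a)) = wt C + Finsupp.single k 1 := by
  have hne : a ≠ b := by intro h; rw [h] at hab; omega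
  ext i
  have := wt_upd C a b hne (insert k (C b)) (C a) i
  rw [Finsupp.add_apply, Finsupp.single_apply]
  by_cases hik : i = k
  · subst hik
    simp [hk] at this ⊢
    omega
  · simp [hik, Ne.symm hik] at this ⊢
    omega

theorem UB_stp (hab : (a : ℕ) + 1 = b) (hka : k ≤ a) (hs : Supp f k) (h : UB f k a) : UB (stp f k a b) k b := by
  classical
  have hne : a ≠ b := by intro h; rw [h] at hab; omega
  have hkb : (k : ℕ) ≤ b := by rw [Fin.le_def] at hka; omega
  intro w β
  by_cases hw : Fixes k w
  swap
  · rw [Supp_stp f k a b k hka hkb hs w hw]; simp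
  have hsub : AdmSet k a w β ⊆ AdmSet k b w β := by
    intro C; simp only [mem_AdmSet]; rintro ⟨h1, h2⟩; exact ⟨h1.mono (by omega), h2⟩
  have h1 := h w β
  have h1' := Finset.card_le_card hsub
  rw [coeff_stp]
  by_cases hinv : w.symm b < w.symm a
  swap
  · rw [if_neg hinv]; omega
  rw [if_pos hinv]
  by_cases hβ : k ∈ β.support
  swap
  · rw [if_neg hβ]; omega
  rw [if_pos hβ]
  have h2 := h (swap a b * w) (β - Finsupp.single k 1)
  have hβ' : β - Finsupp.single k 1 + Finsupp.single k 1 = β := by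
    ext i
    rw [Finsupp.mem_support_iff] at hβ
    simp only [Finsupp.add_apply, Finsupp.tsub_apply, Finsupp.single_apply]
    split_ifs with hi
    · subst hi; omega
    · omega
  set S' := AdmSet k a (swap a b * w) (β - Finsupp.single k 1) with hS'
  let Φ : (Fin n → Finset (Fin n)) → (Fin n → Finset (Fin n)) :=
    fun C => upd C a b (insert k (C b)) (C a)
  have hnk : ∀ C ∈ S', k ∉ C b ∧ k ∉ C a := by
    intro C hC
    rw [hS', mem_AdmSet] at hC
    constructor
    · intro hk; have := hC.1.2.2 b k hk rfl; omega
    · intro hk; have := hC.1.2.2 a k hk rfl; omega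
  have hinj : Set.InjOn Φ S' := by
    intro C hC C' hC' heq
    have ha := congrFun heq a
    have hb := congrFun heq b
    simp only [Φ, upd_a, upd_b _ _ _ hne] at ha hb
    funext c
    by_cases hca : c = a
    · rw [hca]; exact hb
    by_cases hcb : c = b
    · rw [hcb, ← Finset.erase_insert (hnk C hC).1, ha, Finset.erase_insert (hnk C' hC').1]
    have hc := congrFun heq c
    simpa only [Φ, upd_c _ _ _ _ hca hcb] using hc
  have himg : S'.image Φ ⊆ AdmSet k b w β := by
    intro C hC
    obtain ⟨C', hC', rfl⟩ := Finset.mem_image.1 hC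
    have hn := hnk C' hC'
    rw [hS', mem_AdmSet] at hC'
    obtain ⟨⟨p1, p2, p3⟩, p4⟩ := hC'
    rw [mem_AdmSet]
    refine ⟨⟨adm_back k a b hab w hw hka hinv C' p1 hn.1, ?_, ?_⟩, ?_⟩
    · intro c i hi
      by_cases hca : c = a
      · subst hca
        simp only [Φ, upd_a, Finset.mem_insert] at hi
        rcases hi with rfl | hi
        · exact le_rfl
        · exact p2 _ _ hi
      by_cases hcb : c = b
      · subst hcb
        simp only [Φ, upd_b _ _ _ hne] at hi
        exact p2 _ _ hi
      · simp only [Φ, upd_c _ _ _ _ hca hcb] at hi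
        exact p2 _ _ hi
    · intro c i hi hik
      have hik : i = k := Fin.ext hik
      subst hik
      by_cases hca : c = a
      · subst hca; omega
      by_cases hcb : c = b
      · subst hcb
        simp only [Φ, upd_b _ _ _ hne] at hi
        exact absurd hi hn.2
      · simp only [Φ, upd_c _ _ _ _ hca hcb] at hi
        have := p3 _ _ hi rfl
        omega
    · rw [wt_back k a b hab C' hn.1, p4, hβ']
  have hdisj : Disjoint (AdmSet k a w β) (S'.image Φ) := by
    rw [Finset.disjoint_left]
    intro C hC hC2
    obtain ⟨C', hC', rfl⟩ := Finset.mem_image.1 hC2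
    rw [mem_AdmSet] at hC
    have := hC.1.2.2 a k (by simp [Φ, upd_a]) rfl
    omega
  have hfin := Finset.card_le_card (Finset.union_subset hsub himg)
  rw [Finset.card_union_of_disjoint hdisj, Finset.card_image_of_injOn hinj] at hfin
  omega

theorem LB_stp (hab : (a : ℕ) + 1 = b) (hka : k ≤ a) (hN : NN f) (h : LB f k a) : LB (stp f k a b) k b := by
  classical
  have hne : a ≠ b := by intro h; rw [h] at hab; omega
  have hkb : (k : ℕ) ≤ b := by rw [Fin.le_def] at hka; omega
  intro w hw β hex hmax
  rw [coeff_stp]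
  have n1 := hN w β
  have n2 := hN (swap a b * w) (β - Finsupp.single k 1)
  by_cases hA : ∃ C, Adm k b w C ∧ wt C = β ∧ k ∈ C a
  swap
  · push Not at hA
    have key : ∀ C, Adm k b w C → wt C = β → Adm k a w C := by
      intro C h1 h2
      refine ⟨h1.1, h1.2.1, fun c i hi hik => ?_⟩
      have hik : i = k := Fin.ext hik
      subst hik
      have := h1.2.2 c i hi rfl
      by_contra hcon
      have : c = a := Fin.ext (by omega)
      exact hA C h1 h2 (this ▸ hi)
    have h1 := h w hw β (by obtain ⟨C, h1, h2⟩ := hex; exact ⟨C, key C h1 h2, h2⟩)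
      (by rw [hab]; exact key)
    split_ifs <;> omega
  obtain ⟨C, ⟨c1, c2, c3⟩, hwt, hkC⟩ := hA
  have hkb' : k ∉ C b := by
    intro hk; have := c3 b k hk rfl; omega
  -- no exchange is possible
  have noex : ∀ s : ℕ, (k : ℕ) < s → cnt (C a) s ≤ cnt (C b) s →
      ¬ (∀ r ≤ s, cnt (rothe w a) r ≤ cnt (rothe w b) r) := by
    intro s hs hc hD
    obtain ⟨t, ht, g1, g2⟩ := exchange (C a) (C b) (rothe w a) (rothe w b) k s (c1 a) (c1 b) hkC
      hkb' (c2 b) hs hc hD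
    let C' := upd C a b (hd (C a) (C b) t) (hd (C b) (C a) t)
    have hadm : Adm k (b + 1) w C' := by
      refine ⟨?_, ?_, ?_⟩
      · intro c
        by_cases hca : c = a
        · subst hca; simp only [C', upd_a]; exact g1
        by_cases hcb : c = b
        · subst hcb; simp only [C', upd_b _ _ _ hne]; exact g2
        · simp only [C', upd_c _ _ _ _ hca hcb]; exact c1 c
      · intro c i hi
        by_cases hca : c = a
        · subst hca; simp only [C', upd_a, mem_hd] at hi
          split_ifs at hi
          · exact c2 _ _ hi
          · exact c2 _ _ hi
        by_cases hcb : c = b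
        · subst hcb; simp only [C', upd_b _ _ _ hne, mem_hd] at hi
          split_ifs at hi
          · exact c2 _ _ hi
          · exact c2 _ _ hi
        · simp only [C', upd_c _ _ _ _ hca hcb] at hi; exact c2 _ _ hi
      · intro c i hi hik
        by_cases hca : c = a
        · subst hca; omega
        by_cases hcb : c = b
        · subst hcb; omega
        · simp only [C', upd_c _ _ _ _ hca hcb] at hi
          have := c3 _ _ hi hik
          omega
    have hwt' : wt C' = β := by
      rw [← hwt]
      ext i
      have := wt_upd C a b hne (hd (C a) (C b) t) (hd (C b) (C a) t) i
      simp only [mem_hd] at this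
      simp only [C']
      split_ifs at this <;> omega
    have := (hmax C' hadm hwt').2.2 b k (by
      simp only [C', upd_b _ _ _ hne, mem_hd]; rw [if_pos ht]; exact hkC) rfl
    omega
  have hinv : w.symm b < w.symm a := by
    by_contra hcon
    have hlt : w.symm a < w.symm b := by
      rcases lt_trichotomy (w.symm a) (w.symm b) with h | h | h
      · exact h
      · exact absurd (w.symm.injective h) hne
      · exact absurd h hcon
    have hsub := rothe_sub w a b hab hlt
    refine noex n k.2 ?_ (fun r _ => cnt_sub hsub r)
    rw [cnt_card _ _ le_rfl, cnt_card _ _ le_rfl, (c1 a).1, (c1 b).1]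
    exact Finset.card_le_card hsub
  have hm := rothe_mem_inv w a b hab hinv
  have hβk : k ∈ β.support := by
    rw [Finsupp.mem_support_iff, ← hwt, wt_split C a b hne]
    simp [hkC]
  rw [if_pos hinv, if_pos hβk]
  have hβ' : β - Finsupp.single k 1 + Finsupp.single k 1 = β := by
    ext i
    rw [Finsupp.mem_support_iff] at hβk
    simp only [Finsupp.add_apply, Finsupp.tsub_apply, Finsupp.single_apply]
    split_ifs with hi
    · subst hi; omega
    · omega
  have hw' : Fixes k (swap a b * w) := (fixes_swap a b k hka hkb w).2 hw
  -- the new diagram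
  let C' := upd C a b (C b) ((C a).erase k)
  have hcnt : ∀ t, cnt (C a) t = cnt ((C a).erase k) t + if (k : ℕ) < t then 1 else 0 := by
    intro t
    have := cnt_insert ((C a).erase k) k (by simp) t
    rwa [Finset.insert_erase hkC] at this
  have hcntD : ∀ t, cnt (rothe w a) t = cnt ((rothe w a).erase (w.symm b)) t +
      if (w.symm b : ℕ) < t then 1 else 0 := by
    intro t
    have := cnt_insert ((rothe w a).erase (w.symm b)) (w.symm b) (by simp) t
    rwa [Finset.insert_erase hm] at this
  have hadm : Adm k a (swap a b * w) C' := by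
    refine ⟨?_, ?_, ?_⟩
    · intro c
      by_cases hca : c = a
      · subst hca; simp only [C', upd_a]; rw [rothe_swap_a w c b hab hinv]; exact c1 b
      by_cases hcb : c = b
      · subst hcb; simp only [C', upd_b _ _ _ hne]; rw [rothe_swap_b w a c hab]
        refine ⟨?_, fun t => ?_⟩
        · rw [Finset.card_erase_of_mem hkC, Finset.card_erase_of_mem hm, (c1 a).1]
        · have q1 := hcnt t
          have q2 := hcntD t
          have q3 := (c1 a).2 t
          by_contra hcon
          push Not at hcon
          have q4 : (k : ℕ) < t := by
            by_contra hkt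
            rw [if_neg hkt] at q1
            omega
          rw [if_pos q4] at q1
          have q5 : t ≤ (w.symm c : ℕ) := by
            by_contra hkt
            rw [if_pos (by omega)] at q2
            omega
          rw [if_neg (by omega)] at q2
          have q6 := cnt_rothe_inv w a c hab
          have q7 := q6 t q5
          have q8 := (c1 c).2 t
          exact noex t q4 (by omega) (fun r hr => q6 r (by omega))
      · simp only [C', upd_c _ _ _ _ hca hcb]; rw [rothe_swap_c w a b hab c hca hcb]; exact c1 c
    · intro c i hi
      by_cases hca : c = a
      · subst hca; simp only [C', upd_a] at hi; exact c2 _ _ hi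
      by_cases hcb : c = b
      · subst hcb; simp only [C', upd_b _ _ _ hne] at hi; exact c2 _ _ (Finset.mem_of_mem_erase hi)
      · simp only [C', upd_c _ _ _ _ hca hcb] at hi; exact c2 _ _ hi
    · intro c i hi hik
      have hik : i = k := Fin.ext hik
      subst hik
      by_cases hca : c = a
      · subst hca; simp only [C', upd_a] at hi; exact absurd hi hkb'
      by_cases hcb : c = b
      · subst hcb; simp [C', upd_b _ _ _ hne] at hi
      · simp only [C', upd_c _ _ _ _ hca hcb] at hi
        have := c3 _ _ hi rfl
        have hca' : (c : ℕ) ≠ a := fun h => hca (Fin.ext h)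
        omega
  have hwt' : wt C' = β - Finsupp.single k 1 := by
    have : wt C' + Finsupp.single k 1 = β := by
      rw [← hwt]
      ext i
      have := wt_upd C a b hne (C b) ((C a).erase k) i
      rw [Finsupp.add_apply, Finsupp.single_apply]
      by_cases hik : i = k
      · subst hik
        simp [hkC, hkb'] at this ⊢
        omega
      · simp [hik, Ne.symm hik] at this ⊢
        simp only [C']
        omega
    rw [← this, add_tsub_cancel_right]
  have hfin := h (swap a b * w) hw' (β - Finsupp.single k 1) ⟨C', hadm, hwt'⟩ (by
    rintro E ⟨e1, e2, e3⟩ hE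
    refine ⟨e1, e2, fun c i hi hik => ?_⟩
    have hik : i = k := Fin.ext hik
    subst hik
    have := e3 c i hi rfl
    by_contra hcon
    have hca : c = a := Fin.ext (by omega)
    subst hca
    have hib : i ∉ E b := by
      intro hk; have := e3 b i hk rfl; omega
    have hE' := hmax (upd E c b (insert i (E b)) (E c)) ⟨adm_back i c b hab w hw hka hinv E e1 hib,
      ?_, ?_⟩ (by rw [wt_back i c b hab E hib, hE, hβ'])
    · have := hE'.2.2 b i (by rw [upd_b _ _ _ hne]; exact hi) rfl
      omega
    · intro c' i' hi'
      by_cases hca : c' = c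
      · subst hca
        simp only [upd_a, Finset.mem_insert] at hi'
        rcases hi' with rfl | hi'
        · exact le_rfl
        · exact e2 _ _ hi'
      by_cases hcb : c' = b
      · subst hcb
        simp only [upd_b _ _ _ hne] at hi'
        exact e2 _ _ hi'
      · simp only [upd_c _ _ _ _ hca hcb] at hi'
        exact e2 _ _ hi'
    · intro c' i' hi' hik'
      by_cases hca : c' = c
      · subst hca; omega
      by_cases hcb : c' = b
      · subst hcb; omega
      · simp only [upd_c _ _ _ _ hca hcb] at hi'
        have := e3 _ _ hi' hik'
        omega)
  omega

end Step

/-- everything needed about one partial product -/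
structure Good (f : Fam n) (k : ℕ) : Prop where
  nn : NN f
  supp : Supp f k
  ub : UB f k n
  lb : LB0 f k

theorem rothe_one (j : Fin n) : rothe (1 : Perm (Fin n)) j = ∅ := by
  ext i
  rw [mem_rothe]
  have : (1 : Perm (Fin n)).symm j = j := rfl
  rw [this, Perm.one_apply]
  simp only [Fin.lt_def, Finset.notMem_empty, iff_false]
  omega

theorem wt_empty : wt (fun _ : Fin n => (∅ : Finset (Fin n))) = 0 := by
  ext i; simp [wt_apply]

theorem good_delta : Good (Pi.single 1 1 : Fam n) n where
  nn := by
    intro w β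
    rw [Pi.single_apply]
    split_ifs
    · rw [coeff_one]; split_ifs <;> norm_num
    · simp
  supp := by
    intro w hw
    rw [Pi.single_apply, if_neg]
    rintro rfl
    exact hw (fun i _ => rfl)
  ub := by
    intro w β
    rw [Pi.single_apply]
    split_ifs with h
    · rw [coeff_one]
      split_ifs with hβ
      · subst h
        have : (fun _ : Fin n => (∅ : Finset (Fin n))) ∈ AdmSet n n 1 β := by
          rw [mem_AdmSet]
          refine ⟨⟨fun c => ?_, by simp, by simp⟩, by rw [wt_empty, hβ]⟩
          rw [rothe_one]
          exact ⟨rfl, fun t => le_rfl⟩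
        have := Finset.card_pos.2 ⟨_, this⟩
        omega
      · omega
    · simp
  lb := by
    rintro w hw β ⟨C, h1, h2, rfl⟩
    have hw1 : w = 1 := by ext i; rw [hw i i.2]; rfl
    subst hw1
    have : C = fun _ => ∅ := by
      funext c
      have := h1 c
      rw [rothe_one] at this
      exact this.empty
    rw [this, wt_empty]
    simp

theorem Fixes.rothe_empty {k : ℕ} {w : Perm (Fin n)} (h : Fixes k w) (c : Fin n) (hc : (c : ℕ) < k) :
    rothe w c = ∅ := by
  ext i
  rw [mem_rothe]
  simp only [Finset.notMem_empty, iff_false]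
  rintro ⟨h1, h2⟩
  have h3 : w.symm c = c := by rw [Equiv.symm_apply_eq]; exact (h c hc).symm
  rw [h3] at h2
  have := h i (by rw [Fin.lt_def] at h2; omega)
  rw [this] at h1
  exact absurd h1 h2.not_gt

theorem LB_init (f : Fam n) (k : Fin n) (h : LB0 f (k + 1)) : LB f k k := by
  rintro w hw β ⟨C, ⟨c1, c2, c3⟩, hwt⟩ _
  have hnk : ∀ c, k ∉ C c := by
    intro c hk
    have h1 := c3 c k hk rfl
    have h2 := c1 c
    rw [hw.rothe_empty c h1] at h2
    rw [h2.empty] at hk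
    simp at hk
  apply h w ?_ β
  · refine ⟨C, c1, fun c i hi => ?_, hwt⟩
    have h1 := c2 c i hi
    have h2 : (i : ℕ) ≠ k := by
      intro h; have : i = k := Fin.ext h
      exact hnk c (this ▸ hi)
    omega
  · intro i hi
    by_cases hik : (i : ℕ) < k
    · exact hw i hik
    have : i = k := Fin.ext (by omega)
    subst this
    by_contra hne
    have g1 : (i : ℕ) ≤ w i := by
      by_contra hcon
      have := hw (w i) (by omega)
      exact hne (w.injective this)
    have g2 : (i : ℕ) ≤ w.symm i := fixes_symm hw i le_rfl
    have g3 : (w i : ℕ) ≠ i := fun h => hne (Fin.ext h)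
    have g4 : (w.symm i : ℕ) ≠ i := by
      intro h
      have : w.symm i = i := Fin.ext h
      rw [Equiv.symm_apply_eq] at this
      exact hne this.symm
    have hmem : i ∈ rothe w i := by
      rw [mem_rothe, Fin.lt_def, Fin.lt_def]; omega
    have g5 := (c1 i).2 (i + 1)
    have g6 : 1 ≤ cnt (rothe w i) (i + 1) := by
      unfold cnt
      rw [Nat.one_le_iff_ne_zero, ← Nat.pos_iff_ne_zero, Finset.card_pos]
      exact ⟨i, by simp [hmem]⟩
    have g7 : 0 < cnt (C i) (i + 1) := by omega
    unfold cnt at g7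
    rw [Finset.card_pos] at g7
    obtain ⟨x, hx⟩ := g7
    rw [Finset.mem_filter] at hx
    have := c2 i x hx.1
    have hxi : x = i := Fin.ext (by omega)
    exact hnk i (hxi ▸ hx.1)

theorem BB_props (f : Fam n) (k : Fin n) (h1 : NN f) (h2 : Supp f k) (h3 : UB f k k)
    (h4 : LB f k k) (l : ℕ) (hl : k + l + 1 ≤ n) :
    NN (BB (uu n (MvPolynomial (Fin n) ℤ)) (X k : MvPolynomial (Fin n) ℤ) k l f) ∧
    Supp (BB (uu n (MvPolynomial (Fin n) ℤ)) (X k : MvPolynomial (Fin n) ℤ) k l f) k ∧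
    UB (BB (uu n (MvPolynomial (Fin n) ℤ)) (X k : MvPolynomial (Fin n) ℤ) k l f) k (k + l) ∧
    LB (BB (uu n (MvPolynomial (Fin n) ℤ)) (X k : MvPolynomial (Fin n) ℤ) k l f) k (k + l) := by
  induction l with
  | zero => exact ⟨h1, h2, h3, h4⟩
  | succ l ih =>
    obtain ⟨i1, i2, i3, i4⟩ := ih (by omega)
    let a : Fin n := ⟨k + l, by omega⟩
    let b : Fin n := ⟨k + l + 1, by omega⟩
    have e : BB (uu n (MvPolynomial (Fin n) ℤ)) (X k : MvPolynomial (Fin n) ℤ) k (l + 1) f =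
        stp (BB (uu n (MvPolynomial (Fin n) ℤ)) (X k : MvPolynomial (Fin n) ℤ) k l f) k a b := by
      rw [BB_left, Module.End.mul_apply]
      funext w
      simp only [hh, stp, uu]
      rw [dif_pos (by omega)]
      rfl
    rw [e]
    have hka : k ≤ a := by rw [Fin.le_def]; simp only [a]; omega
    have hab : (a : ℕ) + 1 = b := rfl
    refine ⟨NN_stp _ _ _ _ i1, Supp_stp _ _ _ _ _ hka (by simp only [b]; omega) i2,
      UB_stp _ k a b hab hka i2 i3, LB_stp _ k a b hab hka i1 i4⟩

theorem good_step (f : Fam n) (k : Fin n) (h : Good f (k + 1)) :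
    Good (BB (uu n (MvPolynomial (Fin n) ℤ)) (X k : MvPolynomial (Fin n) ℤ) k (n - 1 - k) f) k := by
  have hk := k.2
  have p2 : Supp f k := by
    intro w hw
    apply h.supp
    intro hcon
    exact hw (fun i hi => hcon i (by omega))
  have p3 : UB f k k := by
    intro w β
    refine (h.ub w β).trans ?_
    have : AdmSet (k + 1) n w β ⊆ AdmSet k k w β := by
      intro C
      simp only [mem_AdmSet]
      rintro ⟨⟨a1, a2, a3⟩, a4⟩
      refine ⟨⟨a1, fun c i hi => ?_, fun c i hi hik => ?_⟩, a4⟩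
      · have := a2 c i hi; omega
      · have := a2 c i hi; omega
    exact_mod_cast Finset.card_le_card this
  obtain ⟨q1, q2, q3, q4⟩ := BB_props f k h.nn p2 p3 (LB_init f k h.lb) (n - 1 - k) (by omega)
  have e : (k : ℕ) + (n - 1 - k) = n - 1 := by omega
  rw [e] at q3 q4
  refine ⟨q1, q2, ?_, ?_⟩
  · intro w β
    refine (q3 w β).trans ?_
    have : AdmSet k (n-1) w β ⊆ AdmSet k n w β := by
      intro C; simp only [mem_AdmSet]; rintro ⟨h1, h2⟩; exact ⟨h1.mono (by omega), h2⟩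
    exact_mod_cast Finset.card_le_card this
  · rintro w hw β ⟨C, c1, c2, hwt⟩
    have key : ∀ C : Fin n → Finset (Fin n), (∀ c, GLE (C c) (rothe w c)) →
        (∀ c, ∀ i ∈ C c, (k : ℕ) ≤ (i : ℕ)) → Adm k (n - 1) w C := by
      intro C c1 c2
      refine ⟨c1, c2, fun c i hi _ => ?_⟩
      by_contra hcon
      have hc := c.2
      have : rothe w c = ∅ := by
        ext x
        rw [mem_rothe]
        have := (w x).2
        simp only [Fin.lt_def, Finset.notMem_empty, iff_false]
        omega
      have h2 := c1 c
      rw [this] at h2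
      rw [h2.empty] at hi
      simp at hi
    exact q4 w hw β ⟨C, key C c1 c2, hwt⟩ (fun C hC _ => key C hC.1 hC.2.1)

/-- the variables, indexed by natural numbers -/
noncomputable def zz (n : ℕ) (i : ℕ) : MvPolynomial (Fin n) ℤ :=
  if h : i < n then X ⟨i, h⟩ else 0

theorem good_TT (l : ℕ) : ∀ k, k + l = n → Good (TT n (zz n) k l) k := by
  induction l with
  | zero =>
    intro k hk
    obtain rfl : k = n := by omega
    exact good_delta
  | succ l ih =>
    intro k hk
    have h := good_step (TT n (zz n) (k+1) l) ⟨k, by omega⟩ (ih (k+1) (by omega))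
    have e : zz n k = X ⟨k, by omega⟩ := by rw [zz, dif_pos]
    rw [← e] at h
    exact h

theorem TT_upper (w : Perm (Fin n)) (β : Fin n →₀ ℕ) :
    coeff β (TT n (zz n) 0 n w) ≤ ((AdmSet 0 n w β).card : ℤ) :=
  (good_TT n 0 (by omega)).ub w β

theorem TT_lower (w : Perm (Fin n)) (C : Fin n → Finset (Fin n))
    (h : ∀ c, GLE (C c) (rothe w c)) : 1 ≤ coeff (wt C) (TT n (zz n) 0 n w) :=
  (good_TT n 0 (by omega)).lb w (fun i hi => by omega) _ ⟨C, h, by simp, rfl⟩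

theorem rothe_rev (j i : Fin n) : i ∈ rothe Fin.revPerm j ↔ (i : ℕ) + j + 1 < n := by
  rw [mem_rothe]
  have : (Fin.revPerm : Perm (Fin n)).symm j = Fin.rev j := rfl
  rw [this, Fin.revPerm_apply, Fin.lt_def, Fin.lt_def, Fin.val_rev, Fin.val_rev]
  omega

theorem GLE_rev (C : Finset (Fin n)) (j : Fin n) (h : GLE C (rothe Fin.revPerm j)) :
    C = rothe Fin.revPerm j := by
  symm
  apply Finset.eq_of_subset_of_card_le _ h.1.le
  have h1 := h.2 (n - 1 - j)
  have h2 : cnt (rothe Fin.revPerm j) (n - 1 - j) = (rothe (n := n) Fin.revPerm j).card := by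
    unfold cnt; rw [Finset.filter_true_of_mem]
    intro i hi; rw [rothe_rev] at hi; omega
  have h3 : (C.filter fun i : Fin n => (i : ℕ) < n - 1 - j) ⊆ rothe Fin.revPerm j := by
    intro i; rw [Finset.mem_filter, rothe_rev]; omega
  have h4 := Finset.eq_of_subset_of_card_le h3 (by rw [← h2]; exact h1)
  rw [← h4]
  exact Finset.filter_subset _ _

theorem TT_rev : TT n (zz n) 0 n Fin.revPerm = ∏ i : Fin n, X i ^ (n - 1 - (i : ℕ)) := by
  classical
  have e : (∏ i : Fin n, (X i : MvPolynomial (Fin n) ℤ) ^ (n - 1 - (i : ℕ))) =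
      monomial (wt (rothe (n := n) Fin.revPerm)) 1 := by
    rw [monomial_eq, Finsupp.prod_fintype _ _ (fun i => pow_zero _)]
    simp only [map_one, one_mul]
    refine Finset.prod_congr rfl fun i _ => ?_
    congr 1
    rw [wt_apply]
    simp only [rothe_rev]
    rw [Finset.sum_boole, Nat.cast_id]
    have : (Finset.univ.filter fun c : Fin n => (i : ℕ) + c + 1 < n) =
        Finset.univ.filter fun c : Fin n => (c : ℕ) < n - 1 - i := by
      ext c; simp only [Finset.mem_filter, Finset.mem_univ, true_and]; omega
    rw [this, Fin.card_filter_val_lt]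
    omega
  rw [e]
  have refl : ∀ c, GLE (rothe (n := n) Fin.revPerm c) (rothe (n := n) Fin.revPerm c) :=
    fun c => ⟨rfl, fun t => le_rfl⟩
  ext β
  rw [coeff_monomial]
  have hu := TT_upper (n := n) Fin.revPerm β
  have hsub : AdmSet 0 n Fin.revPerm β ⊆ {rothe (n := n) Fin.revPerm} := by
    intro C hC
    rw [mem_AdmSet] at hC
    rw [Finset.mem_singleton]
    funext c
    exact GLE_rev _ _ (hC.1.1 c)
  split_ifs with h
  · subst h
    have hl := TT_lower (n := n) Fin.revPerm _ refl
    have := Finset.card_le_card hsub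
    rw [Finset.card_singleton] at this
    omega
  · have h0 := (good_TT (n := n) n 0 (by omega)).nn Fin.revPerm β
    have : AdmSet 0 n Fin.revPerm β = ∅ := by
      rw [Finset.eq_empty_iff_forall_notMem]
      intro C hC
      have h1 := Finset.mem_singleton.1 (hsub hC)
      rw [mem_AdmSet] at hC
      rw [h1] at hC
      exact h hC.2
    rw [this] at hu
    simp only [Finset.card_empty, Nat.cast_zero] at hu
    omega

theorem TT_family : IsSchubertFamily (TT n (zz n) 0 n) := by
  refine ⟨TT_rev, ?_⟩
  intro w i j hij hw
  have e : ∀ i : Fin n, zz n i = X i := by intro i; rw [zz, dif_pos i.2]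
  have hm := TT_map (n := n) (rename (swap i j) : MvPolynomial (Fin n) ℤ →ₐ[ℤ] _).toRingHom (zz n)
    0 n (w * swap i j)
  have key := TT_diff (zz n) (fun t => (rename (swap i j) : MvPolynomial (Fin n) ℤ →ₐ[ℤ] _).toRingHom
    (zz n t)) i j hij (by simp [e]) (by simp [e]) (by
      intro t h1 h2
      by_cases ht : t < n
      · have : swap i j ⟨t, ht⟩ = ⟨t, ht⟩ :=
          swap_apply_of_ne_of_ne (fun h => h1 (by rw [← h])) (fun h => h2 (by rw [← h]))
        simp [zz, ht, this]
      · simp [zz, ht]) w hw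
  rw [e, e] at key
  rw [key, ← hm]
  rfl

theorem not_asc_rev (w : Perm (Fin n))
    (h : ∀ i j : Fin n, (i : ℕ) + 1 = j → ¬ w i < w j) : w = Fin.revPerm := by
  have anti : ∀ d : ℕ, ∀ i j : Fin n, (i : ℕ) + d + 1 = j → w j < w i := by
    intro d
    induction d with
    | zero =>
      intro i j hij
      have h1 := h i j hij
      rcases lt_trichotomy (w i) (w j) with h | h | h
      · exact absurd h h1
      · have := w.injective h; subst this; omega
      · exact h
    | succ d ih =>
      intro i j hij
      have hj := j.2
      have h1 := ih i ⟨i + d + 1, by omega⟩ rfl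
      have h2 := h ⟨i + d + 1, by omega⟩ j (by simp only; omega)
      exact lt_of_le_of_lt (not_lt.1 h2) h1
  have hmono : StrictMono fun i : Fin n => w (Fin.rev i) := by
    intro i j hij
    have h1 := i.2
    have h2 := j.2
    rw [Fin.lt_def] at hij
    exact anti ((j : ℕ) - i - 1) _ _ (by rw [Fin.val_rev, Fin.val_rev]; omega)
  have hid : (fun i : Fin n => w (Fin.rev i)) = id := by
    rw [← hmono.range_inj strictMono_id]
    rw [Set.range_id]
    apply Function.Surjective.range_eq
    exact w.surjective.comp Fin.rev_surjective
  ext i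
  have := congrFun hid (Fin.rev i)
  simp only [Fin.rev_rev, id] at this
  rw [this]
  rfl

theorem measure_lt (w : Perm (Fin n)) (i j : Fin n) (hij : (i : ℕ) + 1 = j) (hw : w i < w j) :
    ∑ a : Fin n, (a : ℕ) * ((w * swap i j) a : ℕ) < ∑ a : Fin n, (a : ℕ) * (w a : ℕ) := by
  have hne : i ≠ j := by intro h; rw [h] at hij; omega
  have split : ∀ g : Fin n → ℕ, ∑ a, g a = g i + (g j + ∑ a ∈ (Finset.univ.erase i).erase j, g a) := by
    intro g
    rw [Finset.add_sum_erase (Finset.univ.erase i) _ (by simp [hne.symm]),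
      Finset.add_sum_erase _ _ (Finset.mem_univ i)]
  rw [split, split fun a => (a : ℕ) * (w a : ℕ)]
  have : ∑ a ∈ (Finset.univ.erase i).erase j, (a : ℕ) * ((w * swap i j) a : ℕ) =
      ∑ a ∈ (Finset.univ.erase i).erase j, (a : ℕ) * (w a : ℕ) := by
    refine Finset.sum_congr rfl fun a ha => ?_
    simp only [Finset.mem_erase, Finset.mem_univ, and_true] at ha
    rw [Perm.mul_apply, swap_apply_of_ne_of_ne ha.2 ha.1]
  rw [this, Perm.mul_apply, Perm.mul_apply, swap_apply_left, swap_apply_right, ← hij]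
  rw [Fin.lt_def] at hw
  nlinarith

theorem family_unique (S T : Perm (Fin n) → MvPolynomial (Fin n) ℤ) (hS : IsSchubertFamily S)
    (hT : IsSchubertFamily T) (w : Perm (Fin n)) : S w = T w := by
  induction hm : ∑ a : Fin n, (a : ℕ) * (w a : ℕ) using Nat.strong_induction_on generalizing w with
  | _ m ih =>
    by_cases h : ∀ i j : Fin n, (i : ℕ) + 1 = j → ¬ w i < w j
    · rw [not_asc_rev w h, hS.1, hT.1]
    · push Not at h
      obtain ⟨i, j, hij, hw⟩ := h
      have hne : i ≠ j := by intro h; rw [h] at hij; omega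
      have h1 := ih _ (hm ▸ measure_lt w i j hij hw) (w * swap i j) rfl
      have h2 := hS.2 w i j hij hw
      have h3 := hT.2 w i j hij hw
      rw [h1, ← h3] at h2
      refine mul_left_cancel₀ ?_ h2
      rw [sub_ne_zero]
      exact fun h => hne (X_injective h)

end Bounds

end SchubertAux

/- **Coefficient bounds for Schubert polynomials**: `Min_w ≤ S_w ≤ Max_w` coefficientwise.
For every exponent `β`: if some diagram `C ≤ D(w)` has `x^C = x^β` then the coefficient of
`x^β` in `S_w` is at least `1`; and the coefficient of `x^β` in `S_w` is at most the number of
diagrams `C ≤ D(w)` with `x^C = x^β`. -/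
open scoped Classical in
theorem schubert_min_le_le_max (n : ℕ) (hn : 1 ≤ n) (w : Equiv.Perm (Fin n))
    (S : Equiv.Perm (Fin n) → MvPolynomial (Fin n) ℤ) (hS : IsSchubertFamily S) :
    ∀ β : Fin n →₀ ℕ,
      ((∃ C : Fin n → Finset (Fin n), DiagramLE C (rothe w) ∧
          xDiagram C = monomial β 1) → 1 ≤ coeff β (S w)) ∧
      coeff β (S w) ≤
        ((Finset.univ.filter (fun C : Fin n → Finset (Fin n) =>
          DiagramLE C (rothe w) ∧ xDiagram C = monomial β 1)).card : ℤ) := by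
  intro β
  rw [SchubertAux.family_unique S _ hS SchubertAux.TT_family w]
  have hD : ∀ C : Fin n → Finset (Fin n), DiagramLE C (rothe w) ↔
      ∀ c, SchubertAux.GLE (C c) (rothe w c) := by
    intro C
    exact forall_congr' fun c => SchubertAux.galeLE_iff _ _
  constructor
  · rintro ⟨C, h1, h2⟩
    rw [SchubertAux.xDiagram_iff] at h2
    subst h2
    exact SchubertAux.TT_lower w C ((hD C).1 h1)
  · refine (SchubertAux.TT_upper w β).trans ?_
    have : SchubertAux.AdmSet 0 n w β ⊆ Finset.univ.filter (fun C : Fin n → Finset (Fin n) =>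
          DiagramLE C (rothe w) ∧ xDiagram C = monomial β 1) := by
      intro C hC
      rw [SchubertAux.mem_AdmSet] at hC
      rw [Finset.mem_filter]
      exact ⟨Finset.mem_univ _, (hD C).2 hC.1.1, (SchubertAux.xDiagram_iff C β).2 hC.2⟩
    exact_mod_cast Finset.card_le_card this
end

section
/- Let n ≥ 1 and let w be a permutation of [n] avoiding the patterns 1432 and 1423, with Rothe diagram D(w) = (D_1,…,D_n). For each 1 ≤ j ≤ n, let a_j be the largest integer a ≥ 0 such that {1,…,a} ⊆ D_j, and set D'_j = D_j ∖ {1,…,a_j}. Then for all 1 ≤ j_1 < j_2 ≤ n, the sets D'_{j_1} and D'_{j_2} are disjoint. -/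
/-- `D'_j`: the part of column `D_j` above which there is a gap, i.e. the elements `i ∈ D_j`
such that some `k < i` has `k ∉ D_j`.  (Equivalently, `D_j ∖ [a_j]` where `a_j` is the largest
`a` with `{1,…,a} ⊆ D_j`.) -/
def gapPart {n : ℕ} (D : Finset (Fin n)) : Finset (Fin n) :=
  D.filter fun i => ∃ k < i, k ∉ D

theorem containsPattern_four {n : ℕ} (w : Equiv.Perm (Fin n)) (π : Fin 4 → ℕ) (a b c d : Fin n)
    (hab : a < b) (hbc : b < c) (hcd : c < d)
    (h : ∀ s t : Fin 4, π s < π t ↔ w (![a, b, c, d] s) < w (![a, b, c, d] t)) :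
    ContainsPattern w π := by
  have hm : StrictMono ![a, b, c, d] := by
    rw [Fin.strictMono_iff_lt_succ]
    intro i
    fin_cases i
    · exact hab
    · exact hbc
    · exact hcd
  exact ⟨OrderEmbedding.ofStrictMono _ hm, h⟩

/-- If `w` avoids 1432 and 1423, then the sets `D'_{j₁}` and `D'_{j₂}` coming from distinct
columns of the Rothe diagram of `w` are disjoint. -/
theorem rothe_gapParts_disjoint (n : ℕ) (hn : 1 ≤ n) (w : Equiv.Perm (Fin n))
    (h1432 : AvoidsPattern w ![1, 4, 3, 2]) (h1423 : AvoidsPattern w ![1, 4, 2, 3]) :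
    ∀ j₁ j₂ : Fin n, j₁ < j₂ →
      Disjoint (gapPart (rothe w j₁)) (gapPart (rothe w j₂)) := by
  intro j₁ j₂ hj
  rw [Finset.disjoint_left]
  intro i hi1 hi2
  simp only [gapPart, rothe, Finset.mem_filter, Finset.mem_univ, true_and] at hi1 hi2
  obtain ⟨⟨h1, h2⟩, k, hk, hkn⟩ := hi1
  obtain ⟨⟨h3, h4⟩, -⟩ := hi2
  have hkp : k < w.symm j₁ := hk.trans h2
  have hle : w k ≤ j₁ := by
    by_contra hc
    exact hkn ⟨not_le.mp hc, hkp⟩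
  have hlt : w k < j₁ := by
    refine lt_of_le_of_ne hle fun he => ?_
    rw [← he, Equiv.symm_apply_apply] at hkp
    exact lt_irrefl _ hkp
  have hne : w.symm j₁ ≠ w.symm j₂ := fun he => hj.ne (w.symm.injective he)
  rcases lt_or_gt_of_ne hne with hp | hp
  · apply h1423
    refine containsPattern_four w _ k i _ _ hk h2 hp ?_
    intro s t
    fin_cases s <;> fin_cases t <;> simp <;> order
  · apply h1432
    refine containsPattern_four w _ k i _ _ hk h4 hp ?_
    intro s t
    fin_cases s <;> fin_cases t <;> simp <;> order
end

section
/- Let n ≥ 1 and let α ∈ ℤ_{≥0}^n be a composition avoiding the composition pattern (0,2), i.e., such that there do not exist indices i < j with α_j − α_i ≥ 2. Let D(α) = (D_1,…,D_n) be the skyline diagram of α. For each 1 ≤ j ≤ n, let a_j be the largest integer a ≥ 0 such that {1,…,a} ⊆ D_j, and set D'_j = D_j ∖ {1,…,a_j}. Then for all 1 ≤ j_1 < j_2 ≤ n, the sets D'_{j_1} and D'_{j_2} are disjoint. -/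
/-- If `α` avoids the composition pattern `(0,2)`, then the sets `D'_{j₁}` and `D'_{j₂}`
coming from distinct columns of the skyline diagram of `α` are disjoint. -/
theorem skyline_gapParts_disjoint (n : ℕ) (hn : 1 ≤ n) (α : Fin n → ℕ)
    (h : ¬ ∃ i j : Fin n, i < j ∧ α i + 2 ≤ α j) :
    ∀ j₁ j₂ : Fin n, j₁ < j₂ →
      Disjoint (gapPart (skyline α j₁)) (gapPart (skyline α j₂)) := by
  intro j₁ j₂ hj
  rw [Finset.disjoint_left]
  intro i h1 h2
  simp only [gapPart, skyline, Finset.mem_filter, Finset.mem_univ, true_and, not_lt] at h1 h2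
  obtain ⟨_, k, hk, hk1⟩ := h1
  have hj' : (j₁ : ℕ) < j₂ := hj
  have h3 := h2.1
  exact h ⟨k, i, hk, by omega⟩
end

section
/- Let w be a permutation of [n] containing the pattern 1432. Let i_0 be the largest index i such that there exist i < k < p < q with w_i w_k w_p w_q order isomorphic to 1432; given i_0, let k_0 be the smallest index k such that there exist k < p < q with w_{i_0} w_k w_p w_q order isomorphic to 1432; and let w_{i_0} w_{k_0} w_{p_0} w_{q_0} (i_0 < k_0 < p_0 < q_0) be any subsequence order isomorphic to 1432. Set j_0 = w_{q_0} and l_0 = w_{p_0}. Then: (a) w_{q_0} < w_i < w_{p_0} for every i with i_0 < i < k_0; (b) i_0 ∉ D(w)_{j_0}, and i ∈ D(w)_{j_0} for every i with i_0 < i ≤ k_0; (c) k_0 ∈ D(w)_{l_0}, and i ∉ D(w)_{l_0} for every i with i_0 ≤ i < k_0. -/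
/-- Suppose `w` contains the pattern 1432.  Let `i₀` be the largest index beginning an
occurrence of 1432, then `k₀` the smallest second index of an occurrence starting at `i₀`,
and let `w_{i₀} w_{k₀} w_{p₀} w_{q₀}` be any occurrence of 1432 (order isomorphism:
`w_{i₀} < w_{q₀} < w_{p₀} < w_{k₀}`).  With `j₀ = w_{q₀}` and `l₀ = w_{p₀}`:
(a) `w_{q₀} < w_i < w_{p₀}` for `i₀ < i < k₀`;
(b) `(i₀, j₀) ∉ D(w)` and `(i, j₀) ∈ D(w)` for `i₀ < i ≤ k₀`;
(c) `(k₀, l₀) ∈ D(w)` and `(i, l₀) ∉ D(w)` for `i₀ ≤ i < k₀`. -/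
theorem rothe_local_configuration (n : ℕ) (w : Equiv.Perm (Fin n))
    (i₀ k₀ p₀ q₀ : Fin n)
    (hik : i₀ < k₀) (hkp : k₀ < p₀) (hpq : p₀ < q₀)
    (hocc : w i₀ < w q₀ ∧ w q₀ < w p₀ ∧ w p₀ < w k₀)
    (hmax : ∀ i k p q : Fin n, i < k → k < p → p < q →
      w i < w q → w q < w p → w p < w k → i ≤ i₀)
    (hmin : ∀ k p q : Fin n, i₀ < k → k < p → p < q →
      w i₀ < w q → w q < w p → w p < w k → k₀ ≤ k) :
    (∀ i : Fin n, i₀ < i → i < k₀ → w q₀ < w i ∧ w i < w p₀) ∧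
    (i₀ ∉ rothe w (w q₀) ∧ ∀ i : Fin n, i₀ < i → i ≤ k₀ → i ∈ rothe w (w q₀)) ∧
    (k₀ ∈ rothe w (w p₀) ∧ ∀ i : Fin n, i₀ ≤ i → i < k₀ → i ∉ rothe w (w p₀)) := by
  obtain ⟨h1, h2, h3⟩ := hocc
  have ha : ∀ i : Fin n, i₀ < i → i < k₀ → w q₀ < w i ∧ w i < w p₀ := by
    intro i hi hk
    have hiq : i < q₀ := hk.trans (hkp.trans hpq)
    have hip : i < p₀ := hk.trans hkp
    constructor
    · by_contra hc
      have hne : w i ≠ w q₀ := fun h => hiq.ne (w.injective h)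
      have hlt : w i < w q₀ := lt_of_le_of_ne (not_lt.mp hc) hne
      exact absurd (hmax i k₀ p₀ q₀ hk hkp hpq hlt h2 h3) (not_le.mpr hi)
    · by_contra hc
      have hne : w p₀ ≠ w i := fun h => hip.ne' (w.injective h)
      have hlt : w p₀ < w i := lt_of_le_of_ne (not_lt.mp hc) hne
      exact absurd (hmin i p₀ q₀ hi hip hpq h1 h2 hlt) (not_le.mpr hk)
  refine ⟨ha, ⟨?_, ?_⟩, ?_, ?_⟩
  · intro h
    simp only [rothe, Finset.mem_filter] at h
    exact lt_asymm h.2.1 h1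
  · intro i hi hk
    simp only [rothe, Finset.mem_filter, Finset.mem_univ, true_and, Equiv.symm_apply_apply]
    refine ⟨?_, hk.trans_lt (hkp.trans hpq)⟩
    rcases hk.lt_or_eq with hk | rfl
    · exact (ha i hi hk).1
    · exact h2.trans h3
  · simp only [rothe, Finset.mem_filter, Finset.mem_univ, true_and, Equiv.symm_apply_apply]
    exact ⟨h3, hkp⟩
  · intro i hi hk h
    simp only [rothe, Finset.mem_filter] at h
    rcases hi.lt_or_eq with hi | rfl
    · exact lt_asymm h.2.1 (ha i hi hk).2
    · exact lt_asymm h.2.1 (h1.trans h2)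
end

section
/- Let α = (α_1,…,α_n) ∈ ℤ_{≥0}^n be a composition containing the composition pattern (0,2), i.e., there exist indices i < k with α_k − α_i ≥ 2. Let i_0 be the largest index i such that α_k − α_i ≥ 2 for some k > i, and let k_0 be the smallest index k > i_0 with α_{k_0} − α_{i_0} ≥ 2. Then α_i = α_{i_0} + 1 for every i with i_0 < i < k_0. -/
/-- Suppose the composition `α` contains the pattern `(0,2)`.  Let `i₀` be the largest index
`i` such that `α k - α i ≥ 2` for some `k > i`, and let `k₀` be the smallest index `k > i₀`
with `α k₀ - α i₀ ≥ 2`.  Then `α i = α i₀ + 1` for every `i` with `i₀ < i < k₀`. -/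
theorem composition_between_indices_eq (n : ℕ) (α : Fin n → ℕ) (i₀ k₀ : Fin n)
    (hik : i₀ < k₀) (h02 : α i₀ + 2 ≤ α k₀)
    (hmax : ∀ i k : Fin n, i < k → α i + 2 ≤ α k → i ≤ i₀)
    (hmin : ∀ k : Fin n, i₀ < k → α i₀ + 2 ≤ α k → k₀ ≤ k) :
    ∀ i : Fin n, i₀ < i → i < k₀ → α i = α i₀ + 1 := by
  intro i h1 h2
  have a : ¬ (α i₀ + 2 ≤ α i) := fun h => absurd (hmin i h1 h) (not_le.mpr h2)
  have b : ¬ (α i + 2 ≤ α k₀) := fun h => absurd (hmax i k₀ h2 h) (not_le.mpr h1)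
  omega
end
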